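/- arXiv:1905.13502 — 3 statements merged into one kernel-verified Lean document; each statement's English description precedes it below -/
import Mathlib

section
/- For all a, b ∈ F∖{0}, the pushforward of μ_a under the homothety λ_b : v ↦ b·v on V = Fⁿ equals ‖b‖^{2−n}·μ_{ab²}; that is, (λ_b)_*(μ_a) = ‖b‖^{2−n}·μ_{ab²} as measures on V∖X₀. (This is Lemma 6.3 of the paper, the homogeneity property of the fiber measures |ω_a| on the hyperboloids X_a.) -/
open MeasureTheory

namespace QuadraticMap

variable {F : Type*} [NontriviallyNormedField F] [CompleteSpace F]

theorem continuous_of_pi {ι : Type*} [Finite ι] (q : QuadraticForm F (ι → F)) :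
    Continuous q := by
  classical
  have := Fintype.ofFinite ι
  have key (s : Finset ι) :
      Continuous fun x : ι → F => q (∑ i ∈ s, x i • (Pi.single i 1 : ι → F)) := by
    induction s using Finset.induction_on with
    | empty => simpa using continuous_const
    | insert a s ha ih =>
      have hlin : Continuous fun y : ι → F => q.polarBilin.flip (Pi.single a 1) y :=
        LinearMap.continuous_of_finiteDimensional _
      have hpolar : Continuous fun x : ι → F =>
          q.polarBilin.flip (Pi.single a 1) (∑ i ∈ s, x i • (Pi.single i 1 : ι → F)) :=
        hlin.comp (by fun_prop)
      have heq : (fun x : ι → F => q (∑ i ∈ insert a s, x i • (Pi.single i 1 : ι → F))) =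
          fun x => x a * x a * q (Pi.single a 1)
            + q (∑ i ∈ s, x i • (Pi.single i 1 : ι → F))
            + x a * q.polarBilin.flip (Pi.single a 1)
              (∑ i ∈ s, x i • (Pi.single i 1 : ι → F)) := by
        funext x
        rw [Finset.sum_insert ha, QuadraticMap.map_add q, QuadraticMap.map_smul,
          QuadraticMap.polar_smul_left, QuadraticMap.polar_comm]
        simp only [smul_eq_mul, LinearMap.flip_apply, QuadraticMap.polarBilin_apply_apply]
      rw [heq]
      exact ((((continuous_apply a).mul (continuous_apply a)).mul continuous_const).add ih).add
        ((continuous_apply a).mul hpolar)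
  convert key Finset.univ using 2 with x
  exact congrArg q (pi_eq_sum_univ' x)

end QuadraticMap

namespace MeasureTheory

section Scaling

variable {F : Type*} [NontriviallyNormedField F] [MeasurableSpace F] [BorelSpace F]
  {μF : Measure F}

theorem Measure.map_mul_left_eq_smul_of_image
    (hscale : ∀ b : F, b ≠ 0 → ∀ A : Set F, MeasurableSet A →
      μF ((fun x : F => b * x) '' A) = ENNReal.ofReal ‖b‖ * μF A)
    {b : F} (hb : b ≠ 0) :
    μF.map (fun x => b * x) = ENNReal.ofReal (‖b‖⁻¹) • μF := by
  ext A hA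
  rw [Measure.map_apply (measurable_const_mul b) hA, Measure.smul_apply, smul_eq_mul,
    ← norm_inv, ← hscale b⁻¹ (inv_ne_zero hb) A hA]
  congr 1
  ext x
  simp only [Set.mem_preimage, Set.mem_image]
  exact ⟨fun h => ⟨_, h, inv_mul_cancel_left₀ hb x⟩,
    by rintro ⟨y, hy, rfl⟩; rwa [mul_inv_cancel_left₀ hb]⟩

theorem integral_comp_mul_left_of_image
    (hscale : ∀ b : F, b ≠ 0 → ∀ A : Set F, MeasurableSet A →
      μF ((fun x : F => b * x) '' A) = ENNReal.ofReal ‖b‖ * μF A)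
    {b : F} (hb : b ≠ 0) (f : F → ℂ) :
    ∫ x, f (b * x) ∂μF = ((‖b‖⁻¹ : ℝ) : ℂ) * ∫ x, f x ∂μF := by
  have h := (Homeomorph.mulLeft₀ b hb).measurableEmbedding.integral_map (μ := μF) f
  simp only [Homeomorph.coe_mulLeft₀] at h
  rw [← h, Measure.map_mul_left_eq_smul_of_image hscale hb, integral_smul_measure,
    ENNReal.toReal_ofReal (by positivity), Complex.real_smul]

theorem integral_pi_comp_smul_of_image [SecondCountableTopology F] [SigmaFinite μF]
    {ι : Type*} [Fintype ι]
    (hscale : ∀ b : F, b ≠ 0 → ∀ A : Set F, MeasurableSet A →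
      μF ((fun x : F => b * x) '' A) = ENNReal.ofReal ‖b‖ * μF A)
    {b : F} (hb : b ≠ 0) (f : (ι → F) → ℂ) :
    ∫ v, f (b • v) ∂(Measure.pi fun _ : ι => μF) =
      ((‖b‖⁻¹ ^ Fintype.card ι : ℝ) : ℂ) * ∫ v, f v ∂(Measure.pi fun _ : ι => μF) := by
  have hmap : (Measure.pi fun _ : ι => μF).map (fun v => b • v) =
      ENNReal.ofReal (‖b‖⁻¹ ^ Fintype.card ι) • Measure.pi fun _ : ι => μF := by
    have hσ : SigmaFinite (μF.map (fun x => b * x)) :=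
      (Homeomorph.mulLeft₀ b hb).toMeasurableEquiv.sigmaFinite_map
    have h := Measure.pi_map_pi (μ := fun _ : ι => μF) (f := fun _ x => b * x)
      (hμ := fun _ => hσ) (fun _ => (measurable_const_mul b).aemeasurable)
    refine h.trans (Measure.pi_eq (μ := fun _ : ι => μF.map (fun x => b * x)) fun s hs => ?_)
    rw [Measure.smul_apply, Measure.pi_pi, ENNReal.ofReal_pow (by positivity)]
    simp [Measure.map_mul_left_eq_smul_of_image hscale hb, Finset.prod_mul_distrib]
  have h := (Homeomorph.smulOfNeZero (α := ι → F) b hb).measurableEmbedding.integral_map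
    (μ := Measure.pi fun _ : ι => μF) f
  simp only [Homeomorph.smulOfNeZero_apply] at h
  rw [← h, hmap, integral_smul_measure, ENNReal.toReal_ofReal (by positivity),
    Complex.real_smul]

end Scaling

theorem _root_.Continuous.eq_zero_of_integral_conj_mul_self {X : Type*} [TopologicalSpace X]
    [MeasurableSpace X] [OpensMeasurableSpace X] {ν : Measure X} [ν.IsOpenPosMeasure]
    [IsFiniteMeasureOnCompacts ν] {D : X → ℂ} (hD : Continuous D) (hDc : HasCompactSupport D)
    (h : ∫ x, (starRingEnd ℂ) (D x) * D x ∂ν = 0) : D = 0 := by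
  have hsq (x : X) : (starRingEnd ℂ) (D x) * D x = ((‖D x‖ ^ 2 : ℝ) : ℂ) := by
    rw [Complex.conj_mul']; push_cast; rfl
  simp_rw [hsq] at h
  rw [integral_complex_ofReal, Complex.ofReal_eq_zero] at h
  have hc : Continuous fun x => ‖D x‖ ^ 2 := by fun_prop
  have hcs : HasCompactSupport fun x => ‖D x‖ ^ 2 :=
    hDc.comp_left (g := fun z : ℂ => ‖z‖ ^ 2) (by simp)
  rw [integral_eq_zero_iff_of_nonneg (fun x => by positivity)
    (hc.integrable_of_hasCompactSupport hcs)] at h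
  have h0 := (hc.ae_eq_iff_eq ν continuous_zero).1 h
  funext x
  simpa using congrFun h0 x

theorem integral_comp_mul_of_fiber {F V : Type*} [MeasurableSpace V] {q : V → F} {μ : Measure V}
    {a : F} (h : μ {v | q v ≠ a} = 0) (φ : F → ℂ) (f : V → ℂ) :
    ∫ v, φ (q v) * f v ∂μ = φ a * ∫ v, f v ∂μ := by
  rw [← integral_const_mul]
  refine integral_congr_ae ?_
  have h' : ∀ᵐ v ∂μ, q v = a := h
  filter_upwards [h'] with v hv
  rw [hv]

/-- Fiber integration of a test function, extended by zero to the degenerate fiber. -/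
noncomputable def fiberIntegral {F V : Type*} [Zero F] [MeasurableSpace V] (μ : F → Measure V)
    (f : V → ℂ) : F → ℂ :=
  Set.indicator {a : F | a ≠ 0} fun a => ∫ v, f v ∂μ a

section Fiber

variable {F V : Type*} [NontriviallyNormedField F] [MeasurableSpace V]
  {q : V → F} {μ : F → Measure V}

theorem fiberIntegral_of_ne_zero {a : F} (ha : a ≠ 0) (f : V → ℂ) :
    fiberIntegral μ f a = ∫ v, f v ∂μ a :=
  Set.indicator_of_mem ha _

theorem fiberIntegral_continuous_and_hasCompactSupport {f : V → ℂ}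
    (hcont : ContinuousOn (fun a : F => ∫ v, f v ∂ μ a) {a : F | a ≠ 0} ∧
      ∃ K : Set F, IsCompact K ∧ (0 : F) ∉ K ∧
        ∀ a : F, a ≠ 0 → a ∉ K → (∫ v, f v ∂ μ a) = 0) :
    Continuous (fiberIntegral μ f) ∧ HasCompactSupport (fiberIntegral μ f) := by
  obtain ⟨hc, K, hK, h0, hz⟩ := hcont
  have hzero (a : F) (ha : a ∉ K) : fiberIntegral μ f a = 0 := by
    by_cases h : a = 0
    · exact Set.indicator_of_notMem (by simpa using h) _
    · rw [fiberIntegral_of_ne_zero h, hz a h ha]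
  have hsub : tsupport (fiberIntegral μ f) ⊆ K :=
    closure_minimal (fun a ha => by_contra fun h => ha (hzero a h)) hK.isClosed
  refine ⟨ContinuousOn.continuous_of_tsupport_subset (s := {a : F | a ≠ 0}) ?_
    isOpen_ne (hsub.trans fun a ha h => h0 (h ▸ ha)), HasCompactSupport.intro hK hzero⟩
  exact hc.congr fun a ha => fiberIntegral_of_ne_zero ha f

theorem integral_comp_mul_eq_fiberIntegral [TopologicalSpace V] [MeasurableSpace F]
    [BorelSpace F] {μF : Measure F} {vol : Measure V} (hq : Continuous q)
    (hsupp : ∀ a : F, a ≠ 0 → μ a {v : V | q v ≠ a} = 0)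
    (hGL : ∀ f : V → ℂ, Continuous f → HasCompactSupport f →
      (∀ v ∈ tsupport f, q v ≠ 0) →
      (∫ v, f v ∂vol) = ∫ a in {a : F | a ≠ 0}, (∫ v, f v ∂ μ a) ∂ μF)
    {φ : F → ℂ} (hφ : Continuous φ) {f : V → ℂ} (hf : Continuous f)
    (hfc : HasCompactSupport f) (hf0 : ∀ v ∈ tsupport f, q v ≠ 0) :
    ∫ v, φ (q v) * f v ∂vol = ∫ a, φ a * fiberIntegral μ f a ∂μF := by
  rw [hGL (fun v => φ (q v) * f v) (by fun_prop) hfc.mul_left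
    fun v hv => hf0 v (tsupport_mul_subset_right hv)]
  have hm : MeasurableSet {a : F | a ≠ 0} := isOpen_ne.measurableSet
  rw [← integral_indicator hm]
  congr 1
  funext a
  by_cases ha : a = 0
  · simp [ha, fiberIntegral]
  · rw [fiberIntegral_of_ne_zero ha, Set.indicator_of_mem (by exact ha),
      integral_comp_mul_of_fiber (hsupp a ha)]

end Fiber

end MeasureTheory

/-- Lemma 6.3 of the paper: homogeneity of the fiber measures of a
Gelfand–Leray family for a quadratic form over a locally compact normed field:
for `a, b ≠ 0`, the pushforward of `μ a` under the homothety `v ↦ b • v` equals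
`‖b‖ ^ (2 - n) • μ (a * b ^ 2)`. -/
theorem stmt0 {F : Type*} [NontriviallyNormedField F] [LocallyCompactSpace F]
    [MeasurableSpace F] [BorelSpace F]
    (μF : Measure F) [μF.IsAddHaarMeasure] [SigmaFinite μF]
    (hscale : ∀ b : F, b ≠ 0 → ∀ A : Set F, MeasurableSet A →
      μF ((fun x : F => b * x) '' A) = ENNReal.ofReal ‖b‖ * μF A)
    (n : ℕ) (hn : 1 ≤ n)
    (q : QuadraticForm F (Fin n → F))
    (μ : F → Measure (Fin n → F))
    (hreg : ∀ a : F, a ≠ 0 → (μ a).Regular)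
    (hsupp : ∀ a : F, a ≠ 0 → μ a {v : Fin n → F | q v ≠ a} = 0)
    (hcont : ∀ f : (Fin n → F) → ℂ, Continuous f → HasCompactSupport f →
      (∀ v ∈ tsupport f, q v ≠ 0) →
      ContinuousOn (fun a : F => ∫ v, f v ∂ μ a) {a : F | a ≠ 0} ∧
      ∃ K : Set F, IsCompact K ∧ (0 : F) ∉ K ∧
        ∀ a : F, a ≠ 0 → a ∉ K → (∫ v, f v ∂ μ a) = 0)
    (hGL : ∀ f : (Fin n → F) → ℂ, Continuous f → HasCompactSupport f →
      (∀ v ∈ tsupport f, q v ≠ 0) →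
      (∫ v, f v ∂(Measure.pi fun _ : Fin n => μF))
        = ∫ a in {a : F | a ≠ 0}, (∫ v, f v ∂ μ a) ∂ μF) :
    ∀ a b : F, a ≠ 0 → b ≠ 0 →
      Measure.map (fun v : Fin n → F => b • v) (μ a)
        = ENNReal.ofReal (‖b‖ ^ ((2 : ℝ) - (n : ℝ))) • μ (a * b ^ 2) := by
  intro a b ha hb
  have : ProperSpace F := .of_locallyCompactSpace F
  have hq : Continuous q := q.continuous_of_pi
  have hqb (v : Fin n → F) : q (b • v) = b ^ 2 * q v := by
    rw [QuadraticMap.map_smul, smul_eq_mul, sq]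
  have hb2 : b ^ 2 ≠ 0 := pow_ne_zero 2 hb
  have hab : a * b ^ 2 ≠ 0 := mul_ne_zero ha hb2
  set c : ℝ := ‖b‖ ^ ((2 : ℝ) - (n : ℝ)) with hc
  have hbpos : 0 < ‖b‖ := norm_pos_iff.2 hb
  have hcpow : ‖b‖⁻¹ ^ n = c * ‖b ^ 2‖⁻¹ := by
    rw [hc, Real.rpow_sub hbpos, Real.rpow_natCast, norm_pow, inv_pow,
      show (2 : ℝ) = ((2 : ℕ) : ℝ) by norm_num, Real.rpow_natCast]
    field_simp
  let S := Homeomorph.smulOfNeZero (α := Fin n → F) b hb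
  have htest (f : (Fin n → F) → ℂ) (hf : Continuous f) (hfc : HasCompactSupport f)
      (hf0 : ∀ v ∈ tsupport f, q v ≠ 0) :
      ∫ v, f (b • v) ∂μ a = c * ∫ v, f v ∂μ (a * b ^ 2) := by
    let fb : (Fin n → F) → ℂ := fun v => f (b • v)
    have hfb : Continuous fb := hf.comp (continuous_const_smul b)
    have hfbc : HasCompactSupport fb := hfc.comp_homeomorph S
    have hfb0 : ∀ v ∈ tsupport fb, q v ≠ 0 := by
      intro v hv h
      have hv' : b • v ∈ tsupport f := by
        have := tsupport_comp_subset_preimage f S.continuous hv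
        simpa [S] using this
      exact hf0 _ hv' (by rw [hqb, h, mul_zero])
    obtain ⟨hg, hgc⟩ := fiberIntegral_continuous_and_hasCompactSupport (hcont f hf hfc hf0)
    obtain ⟨hh, hhc⟩ := fiberIntegral_continuous_and_hasCompactSupport (hcont fb hfb hfbc hfb0)
    set g := fiberIntegral μ f
    set h := fiberIntegral μ fb
    have hg' : Continuous fun x => g (b ^ 2 * x) := hg.comp (continuous_const_mul _)
    have hgc' : HasCompactSupport fun x => g (b ^ 2 * x) :=
      hgc.comp_homeomorph (Homeomorph.mulLeft₀ (b ^ 2) hb2)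
    have hweak (φ : F → ℂ) (hφ : Continuous φ) :
        ∫ x, φ (b ^ 2 * x) * h x ∂μF = ∫ x, φ (b ^ 2 * x) * (c * g (b ^ 2 * x)) ∂μF := by
      have hφb : Continuous fun x => φ (b ^ 2 * x) := hφ.comp (continuous_const_mul _)
      calc ∫ x, φ (b ^ 2 * x) * h x ∂μF
          = ∫ v, φ (q (b • v)) * f (b • v) ∂(Measure.pi fun _ : Fin n => μF) := by
            simp_rw [hqb]
            exact (integral_comp_mul_eq_fiberIntegral hq hsupp hGL hφb hfb hfbc hfb0).symm
        _ = ((‖b‖⁻¹ ^ n : ℝ) : ℂ) * ∫ x, φ x * g x ∂μF := by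
            rw [integral_pi_comp_smul_of_image hscale hb (fun v => φ (q v) * f v),
              Fintype.card_fin, integral_comp_mul_eq_fiberIntegral hq hsupp hGL hφ hf hfc hf0]
        _ = ∫ x, φ (b ^ 2 * x) * (c * g (b ^ 2 * x)) ∂μF := by
            simp_rw [mul_left_comm _ (c : ℂ)]
            rw [integral_const_mul,
              integral_comp_mul_left_of_image hscale hb2 (fun x => φ x * g x), hcpow]
            push_cast
            ring
    let D : F → ℂ := fun x => h x - c * g (b ^ 2 * x)
    have hD : Continuous D := by fun_prop
    have hDc : HasCompactSupport D := hhc.sub hgc'.mul_left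
    have hD0 : D = 0 := by
      refine hD.eq_zero_of_integral_conj_mul_self (ν := μF) hDc ?_
      have hw := hweak (fun x => (starRingEnd ℂ) (D ((b ^ 2)⁻¹ * x)))
        (Complex.continuous_conj.comp (hD.comp (continuous_const_mul _)))
      simp only [inv_mul_cancel_left₀ hb2] at hw
      have hDs : Continuous fun x => (starRingEnd ℂ) (D x) := Complex.continuous_conj.comp hD
      simp only [D, mul_sub] at hw hDs ⊢
      rw [integral_sub, hw, sub_self]
      · exact (hDs.mul hh).integrable_of_hasCompactSupport hhc.mul_left
      · exact (hDs.mul (continuous_const.mul hg')).integrable_of_hasCompactSupport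
          hgc'.mul_left.mul_left
    have hDa : h a - c * g (b ^ 2 * a) = 0 := congrFun hD0 a
    rw [mul_comm (b ^ 2) a] at hDa
    have := sub_eq_zero.1 hDa
    simpa only [g, h, fb, fiberIntegral_of_ne_zero ha, fiberIntegral_of_ne_zero hab] using this
  have := hreg a ha
  have := hreg _ hab
  have : (Measure.map (fun v : Fin n → F => b • v) (μ a)).Regular := Measure.Regular.map S
  have : (ENNReal.ofReal c • μ (a * b ^ 2)).Regular :=
    Measure.Regular.smul ENNReal.ofReal_ne_top
  refine Measure.ext_of_integral_eq_on_compactlySupported fun f => ?_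
  obtain ⟨u, hu, hau, h0u⟩ : ∃ u : Set F, IsOpen u ∧ a * b ^ 2 ∈ u ∧ (0 : F) ∉ closure u := by
    obtain ⟨u, w, hu, hw, hau, h0w, huw⟩ := t2_separation hab
    exact ⟨u, hu, hau, fun h => (huw.closure_left hw).le_bot ⟨h, h0w⟩⟩
  obtain ⟨ψ, hψ0, hψ1, -⟩ := exists_continuous_zero_one_of_isClosed hu.isClosed_compl
    (isClosed_singleton (x := a * b ^ 2)) (by simpa using hau)
  have hψa : ψ (a * b ^ 2) = 1 := hψ1 rfl
  have hψu : tsupport ψ ⊆ closure u :=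
    closure_mono fun x hx => by_contra fun h => hx (hψ0 h)
  have hfc : HasCompactSupport fun v => (f v : ℂ) :=
    f.hasCompactSupport.comp_left (g := fun x : ℝ => (x : ℂ)) Complex.ofReal_zero
  have hψq : Continuous fun v => (ψ (q v) : ℂ) := by fun_prop
  have hfcont : Continuous fun v => (f v : ℂ) := Complex.continuous_ofReal.comp f.continuous
  have key := htest (fun v => (ψ (q v) : ℂ) * f v) (hψq.mul hfcont) hfc.mul_left (by
    intro v hv h0
    have h1 : v ∈ tsupport fun v => ψ (q v) := by
      refine closure_mono (Function.support_subset_iff'.2 fun x hx => ?_) hv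
      simp [Function.notMem_support.1 hx]
    have h2 : q v ∈ tsupport ψ := tsupport_comp_subset_preimage ψ hq h1
    exact h0u (h0 ▸ hψu h2))
  rw [integral_comp_mul_of_fiber (hsupp _ hab) (fun x => (ψ x : ℂ)) (fun v => (f v : ℂ))] at key
  simp_rw [hqb] at key
  rw [integral_comp_mul_of_fiber (hsupp a ha) (fun x => (ψ (b ^ 2 * x) : ℂ))
    (fun v => (f (b • v) : ℂ)), mul_comm (b ^ 2) a, hψa, Complex.ofReal_one, one_mul, one_mul,
    integral_complex_ofReal, integral_complex_ofReal] at key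
  rw [integral_smul_measure, ENNReal.toReal_ofReal (by positivity), smul_eq_mul,
    show Measure.map (fun v : Fin n → F => b • v) (μ a) = Measure.map S (μ a) from rfl,
    S.measurableEmbedding.integral_map]
  exact_mod_cast key
end

section
/- Fix a ∈ ℚ_p∖{0} and set Y_a = {v ∈ ℚ_pⁿ : q(v) ∈ a·(ℚ_p^×)²}, where a·(ℚ_p^×)² = {ab² : b ∈ ℚ_p^×}. Then for every continuous compactly supported f : ℚ_pⁿ → ℂ with support contained in Y_a, the function b ↦ |b|_p^{n−1}·(∫ f(b·x) dμ_a(x)) is integrable on ℚ_p∖{0} and ∫_{ℚ_pⁿ} f(v) dv = (1/2)·|2a|_p·∫_{ℚ_p∖{0}} (∫ f(b·x) dμ_a(x))·|b|_p^{n−1} db, where db is the Haar measure on ℚ_p giving ℤ_p volume 1. (This is the integral identity of Lemma 6.4 of the paper, in the nonarchimedean case F = ℚ_p; here |b|_p^{n−1} db = |b|_pⁿ · db/|b|_p.) -/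
open MeasureTheory

open Pointwise in
theorem Padic.distribHaarChar_eq_nnnorm {p : ℕ} [Fact p.Prime] (u : ℚ_[p]ˣ) :
    distribHaarChar ℚ_[p] u = ‖(u : ℚ_[p])‖₊ := by
  let := borel ℚ_[p]
  have : BorelSpace ℚ_[p] := ⟨rfl⟩
  let μ : Measure ℚ_[p] := Measure.addHaar
  have hp0 : (p : ℚ_[p]) ≠ 0 := by exact_mod_cast (Fact.out : p.Prime).ne_zero
  have hpR : (0 : ℝ) < p := by exact_mod_cast (Fact.out : p.Prime).pos
  set B : Set ℚ_[p] := Metric.closedBall 0 1 with hB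
  have hBfin : μ B ≠ ⊤ := (isCompact_closedBall (0 : ℚ_[p]) 1).measure_lt_top.ne
  have hBpos : μ B ≠ 0 := (Metric.measure_closedBall_pos μ 0 one_pos).ne'
  have smul_B (v : ℚ_[p]ˣ) : v • B = Metric.closedBall 0 ‖(v : ℚ_[p])‖ := by
    rw [Units.smul_def, hB, smul_closedBall _ _ zero_le_one]
    simp
  have hunit (v : ℚ_[p]ˣ) (hv : ‖(v : ℚ_[p])‖ = 1) : distribHaarChar ℚ_[p] v = 1 :=
    distribHaarChar_eq_of_measure_smul_eq_mul (μ := μ) (s := B) hBpos hBfin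
      (by rw [smul_B, hv]; simp [hB])
  let ϖ : ℚ_[p]ˣ := Units.mk0 (p : ℚ_[p]) hp0
  have hϖ : distribHaarChar ℚ_[p] ϖ = ‖(p : ℚ_[p])‖₊ := by
    refine distribHaarChar_eq_of_measure_smul_eq_mul (μ := μ) (s := B) hBpos hBfin ?_
    have hcover : B = ⋃ i ∈ Finset.range p, Metric.closedBall (i : ℚ_[p]) (p : ℝ)⁻¹ := by
      ext x
      simp only [hB, Set.mem_iUnion, Metric.mem_closedBall, Finset.mem_range, dist_eq_norm, sub_zero]
      constructor
      · intro hx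
        obtain ⟨y, rfl⟩ : ∃ y : ℤ_[p], (y : ℚ_[p]) = x := ⟨⟨x, hx⟩, rfl⟩
        refine ⟨y.zmodRepr, y.zmodRepr_lt_p, ?_⟩
        have h := y.norm_sub_zmodRepr_lt_one
        rw [PadicInt.norm_def, PadicInt.coe_sub, PadicInt.coe_natCast] at h
        rw [← zpow_neg_one, Padic.norm_le_pow_iff_norm_lt_pow_add_one, neg_add_cancel, zpow_zero]
        exact h
      · rintro ⟨i, -, hi⟩
        have h1 : ‖(i : ℚ_[p])‖ ≤ 1 := by simpa using Padic.norm_int_le_one (p := p) i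
        have h2 : (p : ℝ)⁻¹ ≤ 1 :=
          inv_le_one_of_one_le₀ (by exact_mod_cast (Fact.out : p.Prime).one_le)
        calc ‖x‖ = ‖(x - i) + i‖ := by simp
          _ ≤ max ‖x - i‖ ‖(i : ℚ_[p])‖ := Padic.nonarchimedean _ _
          _ ≤ 1 := max_le (hi.trans h2) h1
    have hdisj : (Finset.range p : Set ℕ).PairwiseDisjoint
        fun i : ℕ => Metric.closedBall (i : ℚ_[p]) (p : ℝ)⁻¹ := by
      intro i hi j hj hij
      refine (IsUltrametricDist.closedBall_eq_or_disjoint _ _ _).resolve_left fun h => hij ?_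
      have hmem : (i : ℚ_[p]) ∈ Metric.closedBall (j : ℚ_[p]) (p : ℝ)⁻¹ :=
        h ▸ Metric.mem_closedBall_self (by positivity)
      rw [Metric.mem_closedBall, dist_eq_norm] at hmem
      have hlt : ‖(((i : ℤ) - (j : ℤ) : ℤ) : ℚ_[p])‖ < 1 := by
        push_cast
        exact hmem.trans_lt (inv_lt_one_of_one_lt₀ (by exact_mod_cast (Fact.out : p.Prime).one_lt))
      rw [Padic.norm_intCast_lt_one_iff] at hlt
      have hmod := (Nat.modEq_iff_dvd.2 hlt).symm
      have hi' : i < p := by simpa using hi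
      have hj' : j < p := by simpa using hj
      exact hmod.eq_of_lt_of_lt hi' hj'
    have hball (x : ℚ_[p]) : μ (Metric.closedBall x (p : ℝ)⁻¹) = μ (ϖ • B) := by
      rw [smul_B, ← measure_preimage_add μ x]
      congr 1
      ext y
      simp [ϖ, dist_eq_norm]
    have hsum : μ B = p * μ (ϖ • B) := by
      conv_lhs => rw [hcover]
      rw [measure_biUnion_finset hdisj fun _ _ => Metric.isClosed_closedBall.measurableSet]
      simp [hball]
    rw [hsum, ← mul_assoc]
    have : ((‖(p : ℚ_[p])‖₊ : NNReal) : ENNReal) * p = 1 := by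
      have : ‖(p : ℚ_[p])‖₊ * (p : NNReal) = 1 := by
        ext
        simp [hpR.ne']
      exact_mod_cast this
    rw [this, one_mul]
  obtain ⟨k, hk⟩ : ∃ k : ℤ, ‖(u : ℚ_[p])‖ = ‖((ϖ ^ k : ℚ_[p]ˣ) : ℚ_[p])‖ := by
    refine ⟨(u : ℚ_[p]).valuation, ?_⟩
    rw [Padic.norm_eq_zpow_neg_valuation u.ne_zero]
    simp [ϖ]
  have hsplit : u = (u * (ϖ ^ k)⁻¹) * ϖ ^ k := by simp
  rw [hsplit, map_mul, hunit _ (by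
    rw [Units.val_mul, norm_mul, hk, ← norm_mul, ← Units.val_mul]; simp), one_mul,
    ← hsplit, map_zpow, hϖ]
  ext
  rw [coe_nnnorm, hk]
  simp [ϖ]

theorem Padic.map_mul_left_addHaar {p : ℕ} [Fact p.Prime] [MeasurableSpace ℚ_[p]]
    [BorelSpace ℚ_[p]] (μ : Measure ℚ_[p]) [μ.IsAddHaarMeasure] {b : ℚ_[p]} (hb : b ≠ 0) :
    μ.map (b * ·) = ‖b⁻¹‖ₑ • μ := by
  ext s hs
  rw [Measure.map_apply (measurable_const_mul b) hs, Measure.smul_apply, smul_eq_mul]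
  have h := distribHaarChar_mul μ (Units.mk0 b hb)⁻¹ s
  rw [Padic.distribHaarChar_eq_nnnorm] at h
  rw [← Units.val_mk0 hb]
  refine Eq.trans ?_ (h.symm.trans ?_)
  · rw [← Set.preimage_smul]; rfl
  · simp [enorm_eq_nnnorm]

theorem Padic.map_smul_pi_addHaar {p : ℕ} [Fact p.Prime] [MeasurableSpace ℚ_[p]]
    [BorelSpace ℚ_[p]] (μ : Measure ℚ_[p]) [μ.IsAddHaarMeasure] {n : ℕ} {b : ℚ_[p]} (hb : b ≠ 0) :
    (Measure.pi fun _ : Fin n => μ).map (b • ·) =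
      ‖b⁻¹‖ₑ ^ n • Measure.pi fun _ : Fin n => μ := by
  have hmap := Padic.map_mul_left_addHaar μ hb
  have hσ : ∀ _ : Fin n, SigmaFinite (μ.map (b * ·)) := fun _ => by
    rw [hmap, enorm_eq_nnnorm]
    exact inferInstanceAs (SigmaFinite (‖b⁻¹‖₊ • μ))
  have h := Measure.pi_map_pi (μ := fun _ : Fin n => μ) (f := fun _ x => b * x) (hμ := hσ)
    (fun _ => (measurable_const_mul b).aemeasurable)
  refine Eq.trans h (@Measure.pi_eq _ _ _ _ _ hσ _ fun s _ => ?_)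
  simp [Measure.pi_pi, hmap, Finset.prod_mul_distrib]

theorem MeasureTheory.Measure.restrict_eq_of_forall_small_closedBall {X : Type*} [MetricSpace X]
    [IsUltrametricDist X] [SecondCountableTopology X] [MeasurableSpace X] [BorelSpace X]
    {μ ν : Measure X} {U : Set X} (hU : IsOpen U)
    (h : ∀ x ∈ U, ∃ ε > 0, ∀ r, 0 < r → r ≤ ε →
      μ (Metric.closedBall x r) = ν (Metric.closedBall x r) ∧ μ (Metric.closedBall x r) ≠ ⊤) :
    μ.restrict U = ν.restrict U := by
  let C₁ : Set (Set X) := {s | ∃ x r, 0 < r ∧ s = Metric.closedBall x r ∧ s ⊆ U ∧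
    μ s = ν s ∧ μ s ≠ ⊤}
  let C₂ : Set (Set X) := {s | MeasurableSet s ∧ s ⊆ Uᶜ}
  have hC₁_open : ∀ s ∈ C₁, IsOpen s := by
    rintro s ⟨x, r, hr, rfl, -⟩
    exact IsUltrametricDist.isOpen_closedBall x hr.ne'
  have hcover (O : Set X) (hO : IsOpen O) (hOU : O ⊆ U) :
      ∃ T : Set (Set X), T.Countable ∧ T ⊆ C₁ ∧ ⋃₀ T = O := by
    obtain ⟨T, hTc, hTS, hT⟩ := TopologicalSpace.isOpen_sUnion_countable {s ∈ C₁ | s ⊆ O}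
      fun s hs => hC₁_open s hs.1
    refine ⟨T, hTc, fun s hs => (hTS hs).1, hT.trans (Set.Subset.antisymm ?_ ?_)⟩
    · exact Set.sUnion_subset fun s hs => hs.2
    · intro x hx
      obtain ⟨ε, hε, hεr⟩ := h x (hOU hx)
      obtain ⟨δ, hδ, hδO⟩ := Metric.nhds_basis_closedBall.mem_iff.1 (hO.mem_nhds hx)
      have hmin : 0 < min ε δ := lt_min hε hδ
      have hsub : Metric.closedBall x (min ε δ) ⊆ O :=
        (Metric.closedBall_subset_closedBall (min_le_right _ _)).trans hδO
      exact ⟨_, ⟨⟨x, _, hmin, rfl, hsub.trans hOU, hεr _ hmin (min_le_left _ _)⟩, hsub⟩,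
        Metric.mem_closedBall_self hmin.le⟩
  obtain ⟨T, hTc, hTC, hTU⟩ := hcover U hU subset_rfl
  refine Measure.ext_of_generateFrom_of_cover_subset (S := C₁ ∪ C₂) (T := insert Uᶜ T)
    (le_antisymm ?_ ?_) ?_ ?_ (hTc.insert _) ?_ ?_ ?_
  · rw [BorelSpace.measurable_eq (α := X)]
    refine MeasurableSpace.generateFrom_le fun O (hO : IsOpen O) => ?_
    obtain ⟨T', hTc', hTC', hTO⟩ := hcover (O ∩ U) (hO.inter hU) Set.inter_subset_right
    rw [← Set.inter_union_compl O U, ← hTO]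
    refine MeasurableSet.union ?_ ?_
    · exact MeasurableSet.sUnion hTc' fun s hs =>
        MeasurableSpace.measurableSet_generateFrom (Or.inl (hTC' hs))
    · exact MeasurableSpace.measurableSet_generateFrom (Or.inr
        ⟨hO.measurableSet.inter hU.measurableSet.compl, Set.inter_subset_right⟩)
  · refine MeasurableSpace.generateFrom_le ?_
    rintro s (hs | hs)
    · exact (hC₁_open s hs).measurableSet
    · exact hs.1
  · rintro s (hs | hs) t (ht | ht) hst
    · obtain ⟨x, r, -, rfl, -⟩ := id hs
      obtain ⟨y, r', -, rfl, -⟩ := id ht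
      rcases IsUltrametricDist.closedBall_subset_trichotomy (x := x) (y := y) (r := r) (s := r')
        with h | h | h
      · exact Or.inl (by rwa [Set.inter_eq_left.2 h])
      · exact Or.inl (by rwa [Set.inter_eq_right.2 h])
      · exact absurd h.inter_eq hst.ne_empty
    · exact Or.inr ⟨(hC₁_open s hs).measurableSet.inter ht.1, Set.inter_subset_right.trans ht.2⟩
    · exact Or.inr ⟨hs.1.inter (hC₁_open t ht).measurableSet, Set.inter_subset_left.trans hs.2⟩
    · exact Or.inr ⟨hs.1.inter ht.1, Set.inter_subset_left.trans hs.2⟩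
  · exact Set.insert_subset (Or.inr ⟨hU.measurableSet.compl, subset_rfl⟩)
      (hTC.trans Set.subset_union_left)
  · rw [Set.sUnion_insert, hTU, Set.compl_union_self]
  · rintro s (rfl | hs)
    · simp [Measure.restrict_apply hU.measurableSet.compl]
    · obtain ⟨x, r, -, -, -, -, hfin⟩ := hTC hs
      exact ((Measure.restrict_apply_le _ _).trans_lt hfin.lt_top).ne
  · rintro s (hs | hs)
    · obtain ⟨x, r, -, -, hsub, heq, -⟩ := id hs
      have hm := (hC₁_open s hs).measurableSet
      rw [Measure.restrict_apply hm, Measure.restrict_apply hm, Set.inter_eq_left.2 hsub, heq]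
    · have : s ∩ U = ∅ := (Set.disjoint_left.2 fun x hx hxU => hs.2 hx hxU).inter_eq
      rw [Measure.restrict_apply hs.1, Measure.restrict_apply hs.1, this, measure_empty,
        measure_empty]

theorem Padic.addHaar_closedBall_norm_mul {p : ℕ} [Fact p.Prime] [MeasurableSpace ℚ_[p]]
    [BorelSpace ℚ_[p]] (μ : Measure ℚ_[p]) [μ.IsAddHaarMeasure] {b : ℚ_[p]} (hb : b ≠ 0)
    (x y : ℚ_[p]) (r : ℝ) :
    μ (Metric.closedBall x (‖b‖ * r)) = ‖b‖ₑ * μ (Metric.closedBall y r) := by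
  have htrans (z : ℚ_[p]) (s : ℝ) : μ (Metric.closedBall z s) = μ (Metric.closedBall 0 s) := by
    rw [← measure_preimage_add μ z]
    congr 1
    ext w
    simp [dist_eq_norm]
  rw [htrans x, htrans y, ← smul_eq_mul ‖b‖ₑ, ← Measure.smul_apply]
  have h := Padic.map_mul_left_addHaar μ (inv_ne_zero hb)
  rw [inv_inv] at h
  rw [← h, Measure.map_apply (measurable_const_mul _) Metric.isClosed_closedBall.measurableSet]
  congr 1
  ext w
  simp [norm_mul, norm_inv, inv_mul_le_iff₀ (norm_pos_iff.2 hb)]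

theorem Padic.isOpen_mul_sq {p : ℕ} [Fact p.Prime] {a : ℚ_[p]} (ha : a ≠ 0) :
    IsOpen {t : ℚ_[p] | ∃ b : ℚ_[p], b ≠ 0 ∧ t = a * b ^ 2} := by
  rw [isOpen_iff_mem_nhds]
  rintro _ ⟨b, hb, rfl⟩
  have hderiv : HasStrictDerivAt (fun b : ℚ_[p] => a * b ^ 2) (a * (2 * b)) b := by
    simpa using (hasStrictDerivAt_pow 2 b).const_mul a
  have h := hderiv.map_nhds_eq (mul_ne_zero ha (mul_ne_zero two_ne_zero hb))
  rw [← h, Filter.mem_map]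
  filter_upwards [isOpen_ne.mem_nhds hb] with c hc
  exact ⟨c, hc, rfl⟩

theorem Padic.norm_two_le_one {p : ℕ} [Fact p.Prime] : ‖(2 : ℚ_[p])‖ ≤ 1 := by
  exact_mod_cast Padic.norm_int_le_one (p := p) 2

theorem Padic.mul_sq_preimage_closedBall {p : ℕ} [Fact p.Prime] {a c : ℚ_[p]} (ha : a ≠ 0)
    (hc : c ≠ 0) {ρ : ℝ} (hρ : ρ < ‖2 * c‖) :
    (fun b : ℚ_[p] => a * b ^ 2) ⁻¹' Metric.closedBall (a * c ^ 2) (‖2 * a * c‖ * ρ) =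
      Metric.closedBall c ρ ∪ Metric.closedBall (-c) ρ := by
  ext b
  have hc2 : 0 < ‖2 * c‖ := norm_pos_iff.2 (mul_ne_zero two_ne_zero hc)
  have ha0 : 0 < ‖a‖ := norm_pos_iff.2 ha
  have hfac : ‖a * b ^ 2 - a * c ^ 2‖ = ‖a‖ * (‖b - c‖ * ‖b + c‖) := by
    rw [← norm_mul, ← norm_mul]; congr 1; ring
  have hnorm : ‖2 * a * c‖ * ρ = ‖a‖ * (‖2 * c‖ * ρ) := by
    simp only [norm_mul]; ring
  simp only [Set.mem_preimage, Metric.mem_closedBall, Set.mem_union, dist_eq_norm, sub_neg_eq_add,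
    hfac, hnorm, mul_le_mul_iff_right₀ ha0]
  have hadd (h : ‖b - c‖ < ‖2 * c‖) : ‖b + c‖ = ‖2 * c‖ := by
    refine Padic.norm_eq_of_norm_sub_lt_right ?_
    rwa [show b + c - 2 * c = b - c by ring]
  have hsub (h : ‖b + c‖ < ‖2 * c‖) : ‖b - c‖ = ‖2 * c‖ := by
    rw [norm_sub_rev]
    refine Padic.norm_eq_of_norm_sub_lt_right ?_
    rwa [show c - b - 2 * c = -(b + c) by ring, norm_neg]
  constructor
  · intro h
    rcases lt_or_ge ‖b - c‖ ‖2 * c‖ with h1 | h1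
    · rw [hadd h1, mul_comm] at h
      exact Or.inl (le_of_mul_le_mul_left h hc2)
    rcases lt_or_ge ‖b + c‖ ‖2 * c‖ with h2 | h2
    · rw [hsub h2] at h
      exact Or.inr (le_of_mul_le_mul_left h hc2)
    · exfalso
      have := mul_le_mul h1 h2 hc2.le (norm_nonneg _)
      nlinarith
  · rintro (h | h)
    · rw [hadd (h.trans_lt hρ), mul_comm]
      exact mul_le_mul_of_nonneg_left h hc2.le
    · rw [hsub (h.trans_lt hρ)]
      exact mul_le_mul_of_nonneg_left h hc2.le

theorem Padic.map_mul_sq_addHaar {p : ℕ} [Fact p.Prime] [MeasurableSpace ℚ_[p]]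
    [BorelSpace ℚ_[p]] (μ : Measure ℚ_[p]) [μ.IsAddHaarMeasure] {a : ℚ_[p]} (ha : a ≠ 0) :
    (‖2 * a‖ₑ • ((μ.restrict {b | b ≠ 0}).withDensity (‖·‖ₑ)).map fun b => a * b ^ 2).restrict
        {t | ∃ b : ℚ_[p], b ≠ 0 ∧ t = a * b ^ 2} =
      ((2 : ENNReal) • μ).restrict {t | ∃ b : ℚ_[p], b ≠ 0 ∧ t = a * b ^ 2} := by
  refine (Measure.restrict_eq_of_forall_small_closedBall (Padic.isOpen_mul_sq ha) ?_).symm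
  rintro _ ⟨c, hc, rfl⟩
  have hd0 : 2 * a * c ≠ 0 := mul_ne_zero (mul_ne_zero two_ne_zero ha) hc
  have hd : 0 < ‖2 * a * c‖ := norm_pos_iff.2 hd0
  have hc2 : 0 < ‖2 * c‖ := norm_pos_iff.2 (mul_ne_zero two_ne_zero hc)
  refine ⟨‖2 * a * c‖ * (‖2 * c‖ / 2), by positivity, fun r hr hrε => ⟨?_, ?_⟩⟩
  · obtain ⟨ρ, rfl⟩ : ∃ ρ, r = ‖2 * a * c‖ * ρ := ⟨r / ‖2 * a * c‖, by field_simp⟩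
    have hρ : ρ < ‖2 * c‖ := (le_of_mul_le_mul_left hrε hd).trans_lt (half_lt_self hc2)
    have hmeas (x : ℚ_[p]) (s : ℝ) : MeasurableSet (Metric.closedBall x s) :=
      Metric.isClosed_closedBall.measurableSet
    have hlt : ρ < ‖c‖ := hρ.trans_le (by
      rw [norm_mul]; exact mul_le_of_le_one_left (norm_nonneg _) Padic.norm_two_le_one)
    have hdisj : Disjoint (Metric.closedBall c ρ) (Metric.closedBall (-c) ρ) := by
      refine Set.disjoint_left.2 fun b h1 h2 => hρ.not_ge ?_
      calc ‖2 * c‖ = dist c (-c) := by rw [dist_eq_norm, sub_neg_eq_add, two_mul]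
        _ ≤ max (dist c b) (dist b (-c)) := dist_triangle_max _ _ _
        _ ≤ ρ := max_le (Metric.mem_closedBall'.1 h1) h2
    have hball (x : ℚ_[p]) (hx : ‖x‖ = ‖c‖) :
        ((μ.restrict {b | b ≠ 0}).withDensity (‖·‖ₑ)) (Metric.closedBall x ρ) =
          ‖c‖ₑ * μ (Metric.closedBall 0 ρ) := by
      have hnorm : ∀ b ∈ Metric.closedBall x ρ, ‖b‖ = ‖c‖ := fun b hb => by
        rw [← hx]
        refine Padic.norm_eq_of_norm_sub_lt_right ?_
        rw [Metric.mem_closedBall, dist_eq_norm] at hb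
        exact hx ▸ hb.trans_lt hlt
      have hne : Metric.closedBall x ρ ⊆ {b | b ≠ 0} := fun b hb => by
        have := hnorm b hb
        exact norm_ne_zero_iff.1 (this ▸ norm_ne_zero_iff.2 hc)
      rw [withDensity_apply _ (hmeas _ _), Measure.restrict_restrict (hmeas _ _),
        Set.inter_eq_left.2 hne, setLIntegral_congr_fun (g := fun _ => ‖c‖ₑ) (hmeas _ _)
          (fun b hb => by simp only [← ofReal_norm, hnorm b hb]), setLIntegral_const]
      congr 1
      simpa using Padic.addHaar_closedBall_norm_mul μ one_ne_zero x 0 ρ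
    rw [Measure.smul_apply, Measure.smul_apply, Measure.map_apply (by fun_prop) (hmeas _ _),
      Padic.mul_sq_preimage_closedBall ha hc hρ, measure_union hdisj (hmeas _ _), hball c rfl,
      hball (-c) (norm_neg c), Padic.addHaar_closedBall_norm_mul μ hd0 _ 0, smul_eq_mul,
      smul_eq_mul, enorm_mul (2 * a)]
    ring
  · exact ENNReal.mul_ne_top (by simp) (isCompact_closedBall _ _).measure_lt_top.ne

theorem Padic.lintegral_mul_sq {p : ℕ} [Fact p.Prime] [MeasurableSpace ℚ_[p]]
    [BorelSpace ℚ_[p]] (μ : Measure ℚ_[p]) [μ.IsAddHaarMeasure] {a : ℚ_[p]} (ha : a ≠ 0)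
    {g : ℚ_[p] → ENNReal} (hg : Measurable g)
    (hgS : ∀ t, (¬ ∃ b : ℚ_[p], b ≠ 0 ∧ t = a * b ^ 2) → g t = 0) :
    ‖2 * a‖ₑ * ∫⁻ b in {b | b ≠ 0}, ‖b‖ₑ * g (a * b ^ 2) ∂μ = 2 * ∫⁻ t, g t ∂μ := by
  have hsupp : Function.support g ⊆ {t | ∃ b : ℚ_[p], b ≠ 0 ∧ t = a * b ^ 2} := fun t ht => by
    by_contra h
    exact ht (hgS t h)
  have h := congrArg (fun ν => ∫⁻ t, g t ∂ν) (Padic.map_mul_sq_addHaar μ ha)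
  simp only [setLIntegral_eq_of_support_subset hsupp, lintegral_smul_measure] at h
  rw [lintegral_map hg (by fun_prop), lintegral_withDensity_eq_lintegral_mul _ (by fun_prop)
    (g := fun b => g (a * b ^ 2)) (hg.comp (by fun_prop))] at h
  exact h

/-- A family of measures on `ℚ_pⁿ`, indexed by `ℚ_p`, which off the zero locus of `q` disintegrates
the Haar measure along the fibres of `q` in a locally constant way. -/
structure IsGelfandLerayFamily {p : ℕ} [Fact p.Prime] [MeasurableSpace ℚ_[p]] {n : ℕ}
    (μF : Measure ℚ_[p]) (q : (Fin n → ℚ_[p]) → ℚ_[p])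
    (μ : ℚ_[p] → Measure (Fin n → ℚ_[p])) : Prop where
  finite_on_compacts : ∀ t, t ≠ 0 → IsFiniteMeasureOnCompacts (μ t)
  measure_ne : ∀ t, t ≠ 0 → μ t {v | q v ≠ t} = 0
  eventually_eq : ∀ f : (Fin n → ℚ_[p]) → ℂ, IsLocallyConstant f → HasCompactSupport f →
    (∀ v ∈ tsupport f, q v ≠ 0) →
      ∀ t, t ≠ 0 → ∀ᶠ s in nhds t, (∫ v, f v ∂μ s) = ∫ v, f v ∂μ t
  exists_compact : ∀ f : (Fin n → ℚ_[p]) → ℂ, IsLocallyConstant f → HasCompactSupport f →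
    (∀ v ∈ tsupport f, q v ≠ 0) →
      ∃ K : Set ℚ_[p], IsCompact K ∧ (0 : ℚ_[p]) ∉ K ∧
        ∀ t, t ≠ 0 → t ∉ K → (∫ v, f v ∂μ t) = 0
  integral_eq : ∀ f : (Fin n → ℚ_[p]) → ℂ, IsLocallyConstant f → HasCompactSupport f →
    (∀ v ∈ tsupport f, q v ≠ 0) →
      (∫ v, f v ∂(Measure.pi fun _ : Fin n => μF)) = ∫ t in {t | t ≠ 0}, (∫ v, f v ∂μ t) ∂μF

namespace IsGelfandLerayFamily

variable {p : ℕ} [Fact p.Prime] [MeasurableSpace ℚ_[p]] [BorelSpace ℚ_[p]] {n : ℕ}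
  {μF : Measure ℚ_[p]} {q : (Fin n → ℚ_[p]) → ℚ_[p]} {μ : ℚ_[p] → Measure (Fin n → ℚ_[p])}
  {E : Set (Fin n → ℚ_[p])}

omit [BorelSpace ℚ_[p]] in
theorem measure_inter_preimage (h : IsGelfandLerayFamily μF q μ) {t : ℚ_[p]} (ht : t ≠ 0)
    (E : Set (Fin n → ℚ_[p])) (S : Set ℚ_[p]) :
    μ t (E ∩ q ⁻¹' S) = S.indicator (fun s => μ s E) t := by
  by_cases htS : t ∈ S
  · rw [Set.indicator_of_mem htS]
    refine le_antisymm (measure_mono Set.inter_subset_left) ?_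
    calc μ t E ≤ μ t (E ∩ q ⁻¹' S ∪ {v | q v ≠ t}) := measure_mono fun v hv => by
          by_cases hvt : q v = t
          · exact Or.inl ⟨hv, by rwa [Set.mem_preimage, hvt]⟩
          · exact Or.inr hvt
      _ ≤ μ t (E ∩ q ⁻¹' S) + μ t {v | q v ≠ t} := measure_union_le _ _
      _ = μ t (E ∩ q ⁻¹' S) := by rw [h.measure_ne t ht, add_zero]
  · rw [Set.indicator_of_notMem htS]
    exact measure_mono_null (fun v hv (hvt : q v = t) => htS (hvt ▸ hv.2)) (h.measure_ne t ht)

section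

variable (h : IsGelfandLerayFamily μF q μ) (hE : IsCompact E) (hEo : IsOpen E)
  (hE0 : ∀ v ∈ E, q v ≠ 0)

include hE hEo hE0

omit [MeasurableSpace ℚ_[p]] [BorelSpace ℚ_[p]] in
theorem indicator_admissible :
    IsLocallyConstant (E.indicator (1 : (Fin n → ℚ_[p]) → ℂ)) ∧
      HasCompactSupport (E.indicator (1 : (Fin n → ℚ_[p]) → ℂ)) ∧
      ∀ v ∈ tsupport (E.indicator (1 : (Fin n → ℚ_[p]) → ℂ)), q v ≠ 0 := by
  have hsub : tsupport (E.indicator (1 : (Fin n → ℚ_[p]) → ℂ)) ⊆ E :=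
    closure_minimal Set.support_indicator_subset hE.isClosed
  exact ⟨(LocallyConstant.charFn ℂ ⟨hE.isClosed, hEo⟩).isLocallyConstant,
    hE.of_isClosed_subset isClosed_closure hsub, fun v hv => hE0 v (hsub hv)⟩

omit hE hEo hE0 in
theorem integral_indicator_complex_one (hEo : IsOpen E) (ν : Measure (Fin n → ℚ_[p])) :
    ∫ v, E.indicator (1 : (Fin n → ℚ_[p]) → ℂ) v ∂ν = (ν.real E : ℂ) := by
  rw [show (1 : (Fin n → ℚ_[p]) → ℂ) = fun _ => 1 from rfl,
    integral_indicator_const _ hEo.measurableSet]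
  simp

include h

theorem eventually_measure_eq {t : ℚ_[p]} (ht : t ≠ 0) : ∀ᶠ s in nhds t, μ s E = μ t E := by
  obtain ⟨h1, h2, h3⟩ := indicator_admissible hE hEo hE0
  filter_upwards [h.eventually_eq _ h1 h2 h3 t ht, isOpen_ne.mem_nhds ht] with s hs hs0
  have := h.finite_on_compacts s hs0
  have := h.finite_on_compacts t ht
  rw [integral_indicator_complex_one hEo, integral_indicator_complex_one hEo, Complex.ofReal_inj] at hs
  exact (measureReal_eq_measureReal_iff hE.measure_ne_top hE.measure_ne_top).1 hs

theorem pi_measure_eq_lintegral [IsFiniteMeasureOnCompacts μF] [SigmaFinite μF] :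
    (Measure.pi fun _ : Fin n => μF) E = ∫⁻ t in {t | t ≠ 0}, μ t E ∂μF := by
  obtain ⟨h1, h2, h3⟩ := indicator_admissible hE hEo hE0
  obtain ⟨K, hK, hK0, hKt⟩ := h.exists_compact _ h1 h2 h3
  have hne : MeasurableSet {t : ℚ_[p] | t ≠ 0} := isOpen_ne.measurableSet
  let φ : ℚ_[p] → ℝ := ({t | t ≠ 0} : Set ℚ_[p]).indicator fun t => (μ t).real E
  have hφK (t : ℚ_[p]) (ht : t ∉ K) : φ t = 0 := by
    by_cases ht0 : t = 0
    · simp [φ, ht0]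
    · have := hKt t ht0 ht
      rw [integral_indicator_complex_one hEo, Complex.ofReal_eq_zero] at this
      simp [φ, ht0, this]
  have hφc : Continuous φ := by
    refine continuous_iff_continuousAt.2 fun t => ?_
    by_cases ht : t = 0
    · subst ht
      refine (continuousAt_const (y := (0 : ℝ))).congr ?_
      filter_upwards [hK.isClosed.isOpen_compl.mem_nhds hK0] with s hs using (hφK s hs).symm
    · refine (continuousAt_const (y := φ t)).congr ?_
      filter_upwards [h.eventually_measure_eq hE hEo hE0 ht, isOpen_ne.mem_nhds ht] with s hs hs0
      have hs0' : s ≠ 0 := hs0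
      simp [φ, hs0', ht, measureReal_def, hs]
  have hint : IntegrableOn (fun t => (μ t).real E) {t : ℚ_[p] | t ≠ 0} μF :=
    (integrable_indicator_iff hne).1
      (hφc.integrable_of_hasCompactSupport (HasCompactSupport.intro hK fun t ht => hφK t ht))
  have heq := h.integral_eq _ h1 h2 h3
  simp only [integral_indicator_complex_one hEo] at heq
  rw [integral_complex_ofReal, Complex.ofReal_inj] at heq
  rw [← ofReal_measureReal hE.measure_ne_top, heq, ofReal_integral_eq_lintegral_ofReal hint
    (Filter.Eventually.of_forall fun _ => measureReal_nonneg)]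
  refine setLIntegral_congr_fun hne fun t ht => ?_
  have := h.finite_on_compacts t ht
  exact ofReal_measureReal hE.measure_ne_top

theorem eventually_pi_measure_inter [IsFiniteMeasureOnCompacts μF] [SigmaFinite μF]
    (hq : Continuous q) {t : ℚ_[p]} (ht : t ≠ 0) :
    ∀ᶠ r in nhdsWithin (0 : ℝ) (Set.Ioi 0),
      (Measure.pi fun _ : Fin n => μF) (E ∩ q ⁻¹' Metric.closedBall t r) =
        μ t E * μF (Metric.closedBall t r) := by
  obtain ⟨δ, hδ, hδt⟩ := Metric.nhds_basis_closedBall.mem_iff.1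
    ((h.eventually_measure_eq hE hEo hE0 ht).and (isOpen_ne.mem_nhds ht))
  filter_upwards [Ioc_mem_nhdsGT hδ] with r hr
  have hsub : Metric.closedBall t r ⊆ _ := (Metric.closedBall_subset_closedBall hr.2).trans hδt
  have hm : MeasurableSet (Metric.closedBall t r) := Metric.isClosed_closedBall.measurableSet
  rw [h.pi_measure_eq_lintegral (hE.inter_right (Metric.isClosed_closedBall.preimage hq))
    (hEo.inter ((IsUltrametricDist.isOpen_closedBall t hr.1.ne').preimage hq))
    fun v hv => hE0 v hv.1]
  rw [setLIntegral_congr_fun isOpen_ne.measurableSet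
    (fun s hs => h.measure_inter_preimage hs E (Metric.closedBall t r)),
    setLIntegral_indicator hm,
    Set.inter_eq_left.2 (show Metric.closedBall t r ⊆ {s | s ≠ 0} from fun s hs => (hsub hs).2),
    setLIntegral_congr_fun hm fun s hs => (hsub hs).1, setLIntegral_const]

theorem norm_pow_mul_measure_preimage_smul [μF.IsAddHaarMeasure] [SigmaFinite μF]
    (hq : Continuous q) (hqs : ∀ (b : ℚ_[p]) v, q (b • v) = b ^ 2 * q v)
    {a b : ℚ_[p]} (ha : a ≠ 0) (hb : b ≠ 0) :
    ‖b‖ₑ ^ n * μ a ((b • ·) ⁻¹' E) = ‖b‖ₑ ^ 2 * μ (a * b ^ 2) E := by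
  have hb2 : b ^ 2 ≠ 0 := pow_ne_zero 2 hb
  have hpre_compact : IsCompact ((b • ·) ⁻¹' E) := (Homeomorph.smulOfNeZero b hb).isCompact_preimage.2 hE
  have hpre_open : IsOpen ((b • ·) ⁻¹' E) := hEo.preimage (continuous_const_smul b)
  have hpre_ne : ∀ v ∈ (b • ·) ⁻¹' E, q v ≠ 0 := fun v hv hv0 =>
    hE0 _ hv (by rw [hqs, hv0, mul_zero])
  have htend : Filter.Tendsto (fun r : ℝ => ‖b ^ 2‖ * r) (nhdsWithin 0 (Set.Ioi 0))
      (nhdsWithin 0 (Set.Ioi 0)) := by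
    refine tendsto_nhdsWithin_iff.2 ⟨?_, ?_⟩
    · have : Filter.Tendsto (fun r : ℝ => ‖b ^ 2‖ * r) (nhds 0) (nhds 0) := by
        simpa only [mul_zero] using (continuous_const_mul ‖b ^ 2‖).tendsto (0 : ℝ)
      exact this.mono_left nhdsWithin_le_nhds
    · filter_upwards [self_mem_nhdsWithin] with r hr
      exact mul_pos (norm_pos_iff.2 hb2) hr
  obtain ⟨r, ⟨hr1, hr2⟩, hr0⟩ := (((h.eventually_pi_measure_inter hpre_compact hpre_open hpre_ne hq ha).and
    (htend.eventually (h.eventually_pi_measure_inter hE hEo hE0 hq (mul_ne_zero ha hb2)))).and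
    self_mem_nhdsWithin).exists
  have hpre : (b • ·) ⁻¹' E ∩ q ⁻¹' Metric.closedBall a r =
      (b • ·) ⁻¹' (E ∩ q ⁻¹' Metric.closedBall (a * b ^ 2) (‖b ^ 2‖ * r)) := by
    ext v
    have : ‖b ^ 2 * q v - a * b ^ 2‖ = ‖b ^ 2‖ * ‖q v - a‖ := by
      rw [← norm_mul]; congr 1; ring
    simp only [Set.mem_inter_iff, Set.mem_preimage, Metric.mem_closedBall, dist_eq_norm, hqs, this,
      mul_le_mul_iff_right₀ (norm_pos_iff.2 hb2)]
  have hm : MeasurableSet (E ∩ q ⁻¹' Metric.closedBall (a * b ^ 2) (‖b ^ 2‖ * r)) :=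
    hEo.measurableSet.inter (Metric.isClosed_closedBall.preimage hq).measurableSet
  rw [hpre, ← Measure.map_apply (measurable_const_smul b) hm, Padic.map_smul_pi_addHaar μF hb,
    Measure.smul_apply, hr2, Padic.addHaar_closedBall_norm_mul μF hb2 _ a, smul_eq_mul] at hr1
  have hpos : μF (Metric.closedBall a r) ≠ 0 := (Metric.measure_closedBall_pos μF a hr0).ne'
  have hfin : μF (Metric.closedBall a r) ≠ ⊤ := (isCompact_closedBall a r).measure_ne_top
  have hinv : ‖b‖ₑ ^ n * ‖b⁻¹‖ₑ ^ n = 1 := by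
    rw [← mul_pow, ← enorm_mul, mul_inv_cancel₀ hb]; simp
  refine (ENNReal.mul_left_inj hpos hfin).1 ?_
  rw [mul_assoc, ← hr1, ← mul_assoc, hinv, one_mul, enorm_pow]
  ring

theorem enorm_mul_lintegral_preimage_smul [μF.IsAddHaarMeasure] [SigmaFinite μF] (hn : 1 ≤ n)
    (hq : Continuous q) (hqs : ∀ (b : ℚ_[p]) v, q (b • v) = b ^ 2 * q v) {a : ℚ_[p]} (ha : a ≠ 0)
    (hEa : ∀ v ∈ E, ∃ b : ℚ_[p], b ≠ 0 ∧ q v = a * b ^ 2) :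
    ‖2 * a‖ₑ * ∫⁻ b in {b | b ≠ 0}, ‖b‖ₑ ^ (n - 1) * μ a ((b • ·) ⁻¹' E) ∂μF =
      2 * (Measure.pi fun _ : Fin n => μF) E := by
  have hne : MeasurableSet {t : ℚ_[p] | t ≠ 0} := isOpen_ne.measurableSet
  let g : ℚ_[p] → ENNReal := ({t | t ≠ 0} : Set ℚ_[p]).indicator fun t => μ t E
  have hg : Measurable g := by
    refine measurable_of_continuousOn_compl_singleton 0 fun t ht => ContinuousAt.continuousWithinAt
      ((continuousAt_const (y := g t)).congr ?_)
    have ht0 : t ≠ 0 := ht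
    filter_upwards [h.eventually_measure_eq hE hEo hE0 ht0, isOpen_ne.mem_nhds ht0] with s hs hs0
    have hs0' : s ≠ 0 := hs0
    simp [g, hs0', ht0, hs]
  have hgS (t : ℚ_[p]) (ht : ¬ ∃ b : ℚ_[p], b ≠ 0 ∧ t = a * b ^ 2) : g t = 0 := by
    by_cases ht0 : t = 0
    · simp [g, ht0]
    · simp only [g, Set.indicator_of_mem (show t ∈ {t : ℚ_[p] | t ≠ 0} from ht0)]
      exact measure_mono_null (fun v hv (hvt : q v = t) => ht (hvt ▸ hEa v hv)) (h.measure_ne t ht0)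
  rw [h.pi_measure_eq_lintegral hE hEo hE0, ← lintegral_indicator (f := fun t => μ t E) hne,
    ← Padic.lintegral_mul_sq μF ha hg hgS]
  congr 1
  refine setLIntegral_congr_fun hne fun b (hb : b ≠ 0) => ?_
  have hab : a * b ^ 2 ∈ {t : ℚ_[p] | t ≠ 0} := mul_ne_zero ha (pow_ne_zero 2 hb)
  have hscale := h.norm_pow_mul_measure_preimage_smul hE hEo hE0 hq hqs ha hb
  simp only [g, Set.indicator_of_mem hab]
  obtain ⟨m, rfl⟩ := Nat.exists_eq_add_of_le' hn
  refine (ENNReal.mul_right_inj (enorm_ne_zero.2 hb) enorm_ne_top).1 ?_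
  rw [Nat.add_sub_cancel, ← mul_assoc, ← pow_succ', hscale, ← mul_assoc, sq]

end

end IsGelfandLerayFamily

theorem QuadraticMap.continuous_pi {p : ℕ} [Fact p.Prime] {n : ℕ}
    (q : QuadraticForm ℚ_[p] (Fin n → ℚ_[p])) : Continuous q := by
  have hinv : Invertible (2 : ℚ_[p]) := invertibleOfNonzero two_ne_zero
  let B := (QuadraticMap.associated q).toContinuousBilinearMap
  have hB : ∀ v, q v = B v v := fun v => (QuadraticMap.associated_eq_self_apply ℚ_[p] q v).symm
  rw [show (q : (Fin n → ℚ_[p]) → ℚ_[p]) = fun v => B v v from funext hB]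
  fun_prop

/-- The image under `(b, x) ↦ b • x` of the product of `|b| ^ (n - 1) db` with a measure on
`ℚ_pⁿ`. -/
noncomputable def Padic.polarMeasure {p : ℕ} [Fact p.Prime] [MeasurableSpace ℚ_[p]] {n : ℕ}
    (μF : Measure ℚ_[p]) (ν : Measure (Fin n → ℚ_[p])) : Measure (Fin n → ℚ_[p]) :=
  (((μF.restrict {b | b ≠ 0}).withDensity fun b => ((‖b‖₊ ^ (n - 1) : NNReal) : ENNReal)).prod
    ν).map fun z => z.1 • z.2

section polarMeasure

variable {p : ℕ} [Fact p.Prime] [MeasurableSpace ℚ_[p]] [BorelSpace ℚ_[p]] {n : ℕ}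
  {μF : Measure ℚ_[p]} {ν : Measure (Fin n → ℚ_[p])} [SFinite μF] [SFinite ν]

omit [SFinite μF] in
theorem Padic.polarMeasure_apply {E : Set (Fin n → ℚ_[p])} (hE : MeasurableSet E) :
    Padic.polarMeasure μF ν E =
      ∫⁻ b in {b | b ≠ 0}, ‖b‖ₑ ^ (n - 1) * ν ((b • ·) ⁻¹' E) ∂μF := by
  have hsmul : Measurable fun z : ℚ_[p] × (Fin n → ℚ_[p]) => z.1 • z.2 := by fun_prop
  rw [Padic.polarMeasure, Measure.map_apply hsmul hE, Measure.prod_apply (hsmul hE),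
    lintegral_withDensity_eq_lintegral_mul _ (by fun_prop)
      (measurable_measure_prodMk_left (hsmul hE))]
  simp only [Pi.mul_apply, ENNReal.coe_pow, ← enorm_eq_nnnorm]
  rfl

theorem Padic.integral_polarMeasure {f : (Fin n → ℚ_[p]) → ℂ}
    (hf : Integrable f (Padic.polarMeasure μF ν)) :
    IntegrableOn (fun b : ℚ_[p] => ‖b‖ ^ (n - 1) • ∫ x, f (b • x) ∂ν) {b | b ≠ 0} μF ∧
      ∫ v, f v ∂Padic.polarMeasure μF ν =
        ∫ b in {b | b ≠ 0}, ‖b‖ ^ (n - 1) • ∫ x, f (b • x) ∂ν ∂μF := by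
  have hsmul : Measurable fun z : ℚ_[p] × (Fin n → ℚ_[p]) => z.1 • z.2 := by fun_prop
  have hdens : Measurable fun b : ℚ_[p] => ‖b‖₊ ^ (n - 1) := by fun_prop
  have hint : Integrable (fun z : ℚ_[p] × (Fin n → ℚ_[p]) => f (z.1 • z.2))
      (((μF.restrict {b | b ≠ 0}).withDensity
        fun b => ((‖b‖₊ ^ (n - 1) : NNReal) : ENNReal)).prod ν) := hf.comp_measurable hsmul
  refine ⟨(integrable_withDensity_iff_integrable_smul hdens).1 hint.integral_prod_left, ?_⟩
  rw [Padic.polarMeasure, integral_map hsmul.aemeasurable hf.aestronglyMeasurable,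
    integral_prod _ hint, integral_withDensity_eq_integral_smul hdens]
  rfl

end polarMeasure

theorem IsGelfandLerayFamily.polarMeasure_restrict {p : ℕ} [Fact p.Prime]
    [MeasurableSpace ℚ_[p]] [BorelSpace ℚ_[p]] {n : ℕ} {μF : Measure ℚ_[p]}
    {q : (Fin n → ℚ_[p]) → ℚ_[p]} {μ : ℚ_[p] → Measure (Fin n → ℚ_[p])} [μF.IsAddHaarMeasure]
    [SigmaFinite μF] (h : IsGelfandLerayFamily μF q μ) (hn : 1 ≤ n) (hq : Continuous q)
    (hqs : ∀ (b : ℚ_[p]) v, q (b • v) = b ^ 2 * q v) {a : ℚ_[p]} (ha : a ≠ 0) [SFinite (μ a)] :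
    (‖2 * a‖ₑ • Padic.polarMeasure μF (μ a)).restrict {v | ∃ b : ℚ_[p], b ≠ 0 ∧ q v = a * b ^ 2} =
      ((2 : ENNReal) • Measure.pi fun _ : Fin n => μF).restrict
        {v | ∃ b : ℚ_[p], b ≠ 0 ∧ q v = a * b ^ 2} := by
  have hY : IsOpen {v | ∃ b : ℚ_[p], b ≠ 0 ∧ q v = a * b ^ 2} :=
    (Padic.isOpen_mul_sq ha).preimage hq
  refine (Measure.restrict_eq_of_forall_small_closedBall hY fun v hv => ?_).symm
  obtain ⟨ε, hε, hεY⟩ := Metric.nhds_basis_closedBall.mem_iff.1 (hY.mem_nhds hv)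
  refine ⟨ε, hε, fun r hr hrε => ?_⟩
  have hsub := (Metric.closedBall_subset_closedBall hrε).trans hεY
  have hc := isCompact_closedBall v r
  constructor
  · rw [Measure.smul_apply, Measure.smul_apply, smul_eq_mul, smul_eq_mul,
      Padic.polarMeasure_apply hc.measurableSet]
    refine (h.enorm_mul_lintegral_preimage_smul hc (IsUltrametricDist.isOpen_closedBall v hr.ne')
      ?_ hn hq hqs ha hsub).symm
    rintro w hw
    obtain ⟨b, hb, hwb⟩ := hsub hw
    rw [hwb]
    exact mul_ne_zero ha (pow_ne_zero 2 hb)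
  · exact ENNReal.mul_ne_top (by simp) hc.measure_ne_top

/-- integral identity of Lemma 6.4 of the paper, case `F = ℚ_p`: for
`a ≠ 0` and `f` continuous, compactly supported with support in
`Y_a = {v : q v ∈ a·(ℚ_p^×)²}`, the function `b ↦ |b|_p^{n-1} · ∫ f(b•x) dμ_a(x)` is
integrable on `ℚ_p∖{0}` and
`∫ f dv = (1/2)·|2a|_p · ∫_{b ≠ 0} (∫ f(b•x) dμ_a(x)) |b|_p^{n-1} db`. -/
theorem stmt3 (p : ℕ) [Fact p.Prime] [MeasurableSpace ℚ_[p]] [BorelSpace ℚ_[p]]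
    (μF : Measure ℚ_[p]) [μF.IsAddHaarMeasure] [SigmaFinite μF]
    (hμF : μF {x : ℚ_[p] | ‖x‖ ≤ 1} = 1)
    (n : ℕ) (hn : 1 ≤ n)
    (q : QuadraticForm ℚ_[p] (Fin n → ℚ_[p]))
    (hq : ∀ v : Fin n → ℚ_[p], (∀ w : Fin n → ℚ_[p], q (v + w) - q v - q w = 0) → v = 0)
    (μ : ℚ_[p] → Measure (Fin n → ℚ_[p]))
    (hreg : ∀ a : ℚ_[p], a ≠ 0 → (μ a).Regular)
    (hsupp : ∀ a : ℚ_[p], a ≠ 0 → μ a {v : Fin n → ℚ_[p] | q v ≠ a} = 0)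
    (hloc : ∀ f : (Fin n → ℚ_[p]) → ℂ, IsLocallyConstant f → HasCompactSupport f →
      (∀ v ∈ tsupport f, q v ≠ 0) →
      (∀ a : ℚ_[p], a ≠ 0 → ∀ᶠ a' in nhds a, (∫ v, f v ∂ μ a') = ∫ v, f v ∂ μ a) ∧
      ∃ K : Set ℚ_[p], IsCompact K ∧ (0 : ℚ_[p]) ∉ K ∧
        ∀ a : ℚ_[p], a ≠ 0 → a ∉ K → (∫ v, f v ∂ μ a) = 0)
    (hGL : ∀ f : (Fin n → ℚ_[p]) → ℂ, IsLocallyConstant f → HasCompactSupport f →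
      (∀ v ∈ tsupport f, q v ≠ 0) →
      (∫ v, f v ∂(Measure.pi fun _ : Fin n => μF))
        = ∫ a in {a : ℚ_[p] | a ≠ 0}, (∫ v, f v ∂ μ a) ∂ μF)
    (a : ℚ_[p]) (ha : a ≠ 0)
    (f : (Fin n → ℚ_[p]) → ℂ) (hf : Continuous f) (hfc : HasCompactSupport f)
    (hfY : tsupport f ⊆ {v : Fin n → ℚ_[p] | ∃ b : ℚ_[p], b ≠ 0 ∧ q v = a * b ^ 2}) :
    IntegrableOn (fun b : ℚ_[p] => ‖b‖ ^ (n - 1) • ∫ x, f (b • x) ∂ μ a)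
      {b : ℚ_[p] | b ≠ 0} μF ∧
    (∫ v, f v ∂(Measure.pi fun _ : Fin n => μF))
      = (1 / 2 * ‖2 * a‖) •
          ∫ b in {b : ℚ_[p] | b ≠ 0}, ‖b‖ ^ (n - 1) • (∫ x, f (b • x) ∂ μ a) ∂ μF := by
  have hfam : IsGelfandLerayFamily μF q μ :=
    { finite_on_compacts := fun t ht => have := hreg t ht; inferInstance
      measure_ne := hsupp
      eventually_eq := fun f h1 h2 h3 => (hloc f h1 h2 h3).1
      exists_compact := fun f h1 h2 h3 => (hloc f h1 h2 h3).2
      integral_eq := hGL }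
  have hreg_a := hreg a ha
  have hqs (b : ℚ_[p]) (v : Fin n → ℚ_[p]) : q (b • v) = b ^ 2 * q v := by
    rw [QuadraticMap.map_smul, smul_eq_mul, sq]
  have hrestr := hfam.polarMeasure_restrict hn q.continuous_pi hqs ha
  have hsupport : Function.support f ⊆ _ := (subset_tsupport f).trans hfY
  have ha2 : ‖2 * a‖ₑ ≠ 0 := enorm_ne_zero.2 (mul_ne_zero two_ne_zero ha)
  have hfint : Integrable f (Measure.pi fun _ : Fin n => μF) :=
    hf.integrable_of_hasCompactSupport hfc
  have hpolar : Integrable f (Padic.polarMeasure μF (μ a)) := by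
    rw [← integrable_smul_measure ha2 enorm_ne_top, ← integrableOn_iff_integrable_of_support_subset
      hsupport, IntegrableOn, hrestr]
    exact (hfint.smul_measure ENNReal.ofNat_ne_top).restrict
  have heq := congrArg (fun ν => ∫ v, f v ∂ν) hrestr
  simp only [setIntegral_eq_integral_of_forall_compl_eq_zero
    (fun v hv => Function.notMem_support.1 fun hv' => hv (hsupport hv')),
    integral_smul_measure, toReal_enorm] at heq
  obtain ⟨h1, h2⟩ := Padic.integral_polarMeasure hpolar
  refine ⟨h1, ?_⟩
  rw [← h2, mul_smul, heq, smul_smul]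
  norm_num
end

section
/- Let v₁ ∈ ℚ_pⁿ with q(v₁) = 1, and let ⟨u,v⟩ := q(u+v) − q(u) − q(v) be the associated symmetric bilinear form. Let Φ : ℚ_pⁿ → ℂ be locally constant and compactly supported, let a ∈ ℚ_p∖{0}, and for each m ∈ ℕ set I_m(a) = ∫_{b ∈ p^{−m}ℤ_p} ( ∫_{ℚ_pⁿ} |a|_p^{n/2}·Φ(a·y)·ψ(a²b·q(y))·ψ(⟨v₁,y⟩) dv(y) )·ψ(−b) db. Then the sequence (I_m(a))_m is eventually constant: there exists M such that for all m ≥ M, I_m(a) = |a|_p^{−n/2}·∫ Φ(x)·ψ(a^{−1}·⟨v₁,x⟩) dμ₁(x). (This is the computational core of Proposition 11.1 of the paper, expressing the (N,ψ)-orbital integral of the transferred test function as an explicit integral transform over the hyperboloid X₁, with the Weil representation action and the normalized Fourier transform written out explicitly; the Weil index γ has been cancelled from both sides.) -/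
open MeasureTheory

section PadicHaar

open scoped Pointwise

variable {p : ℕ} [Fact p.Prime]

lemma Padic.closedUnitBall_eq_iUnion :
    {x : ℚ_[p] | ‖x‖ ≤ 1} = ⋃ i ∈ Finset.range p, (fun x : ℚ_[p] => x - i) ⁻¹' {x | ‖x‖ < 1} := by
  ext x
  simp only [Set.mem_ofPred_eq, Set.mem_iUnion, Set.mem_preimage, Finset.mem_range, exists_prop]
  constructor
  · intro hx
    obtain ⟨i, hi, h⟩ := PadicInt.exists_mem_range (⟨x, hx⟩ : ℤ_[p])
    rw [PadicInt.maximalIdeal_eq_span_p, Ideal.mem_span_singleton,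
      ← PadicInt.norm_lt_one_iff_dvd, PadicInt.norm_def] at h
    exact ⟨i, hi, by simpa only [PadicInt.coe_sub, PadicInt.coe_natCast] using! h⟩
  · rintro ⟨i, -, h⟩
    have hi : ‖(i : ℚ_[p])‖ ≤ 1 := by simpa using Padic.norm_int_le_one (p := p) (i : ℤ)
    simpa using (Padic.nonarchimedean (x - (i : ℚ_[p])) i).trans (max_le h.le hi)

lemma Padic.units_smul_closedUnitBall (a : ℚ_[p]ˣ) :
    a • {x : ℚ_[p] | ‖x‖ ≤ 1} = {x : ℚ_[p] | ‖x‖ ≤ ‖(a : ℚ_[p])‖} := by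
  ext x
  have ha : 0 < ‖(a : ℚ_[p])‖ := norm_pos_iff.2 a.ne_zero
  rw [Set.mem_smul_set_iff_inv_smul_mem]
  simp only [Set.mem_ofPred_eq, Units.smul_def, smul_eq_mul, norm_mul, Units.val_inv_eq_inv_val,
    norm_inv]
  rw [inv_mul_le_iff₀ ha, mul_one]

variable [MeasurableSpace ℚ_[p]] {μ : Measure ℚ_[p]} [μ.IsAddHaarMeasure]

lemma Padic.haar_closedUnitBall_ne_zero : μ {x : ℚ_[p] | ‖x‖ ≤ 1} ≠ 0 := by
  have : {x : ℚ_[p] | ‖x‖ ≤ 1} = Metric.closedBall 0 1 := by ext; simp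
  rw [this]
  exact (Metric.measure_closedBall_pos μ _ one_pos).ne'

lemma Padic.haar_closedUnitBall_ne_top : μ {x : ℚ_[p] | ‖x‖ ≤ 1} ≠ ⊤ := by
  have : {x : ℚ_[p] | ‖x‖ ≤ 1} = Metric.closedBall 0 1 := by ext; simp
  rw [this]
  exact (isCompact_closedBall _ _).measure_lt_top.ne

variable [BorelSpace ℚ_[p]]

lemma Padic.haar_closedUnitBall_eq_mul :
    μ {x : ℚ_[p] | ‖x‖ ≤ 1} = p * μ {x : ℚ_[p] | ‖x‖ < 1} := by
  have hm : MeasurableSet {x : ℚ_[p] | ‖x‖ < 1} := measurableSet_lt measurable_norm measurable_const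
  rw [Padic.closedUnitBall_eq_iUnion, measure_biUnion_finset]
  · simp_rw [sub_eq_add_neg, measure_preimage_add_right]
    simp
  · intro i hi j hj hij
    refine Set.disjoint_left.2 fun x hx hx' => hij ?_
    simp only [Set.mem_preimage, Set.mem_ofPred_eq] at hx hx'
    simp only [Finset.coe_range, Set.mem_Iio] at hi hj
    have h : ‖(((i : ℤ) - j : ℤ) : ℚ_[p])‖ < 1 := by
      have := (Padic.nonarchimedean (x - (j : ℚ_[p])) (-(x - (i : ℚ_[p])))).trans_lt
        (max_lt hx' (by rwa [norm_neg]))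
      push_cast
      rwa [show (i : ℚ_[p]) - j = x - j + -(x - i) by ring]
    rw [Padic.norm_intCast_lt_one_iff] at h
    have := Int.eq_zero_of_abs_lt_dvd h (by rw [abs_lt]; omega)
    omega
  · exact fun i _ => hm.preimage (measurable_id.sub_const _)

lemma Padic.distribHaarChar_units (a : ℚ_[p]ˣ) : distribHaarChar ℚ_[p] a = ‖(a : ℚ_[p])‖₊ := by
  let μ : Measure ℚ_[p] := Measure.addHaar
  have hp : (p : ℚ_[p]) ≠ 0 := Nat.cast_ne_zero.2 (Fact.out : p.Prime).ne_zero
  have hunit : ∀ u : ℚ_[p]ˣ, ‖(u : ℚ_[p])‖ = 1 → distribHaarChar ℚ_[p] u = 1 := fun u hu =>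
    distribHaarChar_eq_of_measure_smul_eq_mul (μ := μ) haar_closedUnitBall_ne_zero
      haar_closedUnitBall_ne_top (by rw [units_smul_closedUnitBall, hu]; simp)
  have hchar : distribHaarChar ℚ_[p] (Units.mk0 (p : ℚ_[p]) hp) = (p : NNReal)⁻¹ := by
    refine distribHaarChar_eq_of_measure_smul_eq_mul (μ := μ) haar_closedUnitBall_ne_zero
      haar_closedUnitBall_ne_top ?_
    have : {x : ℚ_[p] | ‖x‖ ≤ ‖(Units.mk0 (p : ℚ_[p]) hp : ℚ_[p])‖} = {x | ‖x‖ < 1} := by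
      ext x
      have := Padic.norm_lt_pow_iff_norm_le_pow_sub_one x 0
      simp at this
      simp [this]
    have hp' : (p : ENNReal) ≠ 0 := Nat.cast_ne_zero.2 (Fact.out : p.Prime).ne_zero
    rw [units_smul_closedUnitBall, this, haar_closedUnitBall_eq_mul,
      ENNReal.coe_inv (by simpa using (Fact.out : p.Prime).ne_zero),
      ENNReal.coe_natCast, ← mul_assoc, ENNReal.inv_mul_cancel hp' (by simp), one_mul]
  set k := (a : ℚ_[p]).valuation
  have hnorm : ‖(a : ℚ_[p])‖ = (p : ℝ) ^ (-k) := Padic.norm_eq_zpow_neg_valuation a.ne_zero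
  have hpR : (p : ℝ) ≠ 0 := Nat.cast_ne_zero.2 (Fact.out : p.Prime).ne_zero
  have hu := hunit (a * (Units.mk0 (p : ℚ_[p]) hp ^ k)⁻¹) (by
    simp [hnorm, inv_mul_cancel₀ (zpow_ne_zero k hpR)])
  rw [map_mul, map_inv, map_zpow, hchar] at hu
  have hu' := eq_inv_of_mul_eq_one_left hu
  rw [hu']
  ext
  simp [hnorm]

lemma Padic.haar_smul_set (a : ℚ_[p]ˣ) (s : Set ℚ_[p]) :
    μ (a • s) = ‖(a : ℚ_[p])‖₊ * μ s := by
  rw [← distribHaarChar_mul μ, distribHaarChar_units]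

lemma Padic.haar_preimage_mul_left {a : ℚ_[p]} (ha : a ≠ 0) (s : Set ℚ_[p]) :
    ‖a‖₊ * μ ((fun x => a * x) ⁻¹' s) = μ s := by
  rw [← Units.val_mk0 ha, ← haar_smul_set, Units.smul_def, Units.val_mk0]
  congr 1
  ext x
  simp [Set.mem_smul_set_iff_inv_smul_mem₀ ha, mul_inv_cancel_left₀ ha]

lemma Padic.haar_closedBall (hμ : μ {x : ℚ_[p] | ‖x‖ ≤ 1} = 1) (m : ℤ) (c : ℚ_[p]) :
    μ {x : ℚ_[p] | ‖x - c‖ ≤ (p : ℝ) ^ m} = ENNReal.ofReal ((p : ℝ) ^ m) := by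
  have hp : (p : ℚ_[p]) ≠ 0 := Nat.cast_ne_zero.2 (Fact.out : p.Prime).ne_zero
  have hnorm : ‖(p : ℚ_[p]) ^ (-m)‖ = (p : ℝ) ^ m := by simp
  have h := haar_smul_set (μ := μ) (Units.mk0 ((p : ℚ_[p]) ^ (-m)) (zpow_ne_zero _ hp))
    {x | ‖x‖ ≤ 1}
  rw [units_smul_closedUnitBall, Units.val_mk0, hμ, mul_one, hnorm] at h
  have htrans := measure_preimage_add_right μ (-c) {x : ℚ_[p] | ‖x‖ ≤ (p : ℝ) ^ m}
  rw [h] at htrans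
  rw [← enorm_eq_nnnorm, ← ofReal_norm, hnorm] at htrans
  simpa [sub_eq_add_neg] using htrans

lemma Padic.integral_pi_comp_smul {ι E : Type*} [Fintype ι] [NormedAddCommGroup E]
    [NormedSpace ℝ E] {a : ℚ_[p]} (ha : a ≠ 0) (f : (ι → ℚ_[p]) → E) :
    ∫ y, f (a • y) ∂(Measure.pi fun _ : ι => μ)
      = (‖a‖ ^ Fintype.card ι)⁻¹ • ∫ x, f x ∂(Measure.pi fun _ : ι => μ) := by
  let e : (ι → ℚ_[p]) ≃ₜ (ι → ℚ_[p]) := Homeomorph.smulOfNeZero a ha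
  have hmap : (Measure.pi fun _ : ι => μ)
      = (‖a‖₊ ^ Fintype.card ι) • (Measure.pi fun _ : ι => μ).map e := by
    refine Measure.pi_eq fun s hs => ?_
    have hpre : e ⁻¹' Set.univ.pi s = Set.univ.pi fun i => (fun x => a * x) ⁻¹' s i := by
      ext y
      simp [e]
    rw [Measure.smul_apply, Measure.map_apply e.measurable (MeasurableSet.univ_pi hs), hpre,
      Measure.pi_pi, ENNReal.smul_def, smul_eq_mul, ENNReal.coe_pow, ← Finset.card_univ,
      ← Finset.prod_const, ← Finset.prod_mul_distrib]
    simp_rw [haar_preimage_mul_left ha]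
  have hpos : ‖a‖ ^ Fintype.card ι ≠ 0 := pow_ne_zero _ (norm_ne_zero_iff.2 ha)
  rw [eq_inv_smul_iff₀ hpos]
  conv_rhs => rw [hmap]
  rw [integral_smul_nnreal_measure, e.measurableEmbedding.integral_map]
  rfl

end PadicHaar

section Orbital

variable {p : ℕ} [Fact p.Prime]

lemma QuadraticForm.continuous_of_padic {n : ℕ} (q : QuadraticForm ℚ_[p] (Fin n → ℚ_[p])) :
    Continuous q := by
  have h : ∀ x, q x = (1 / 2 : ℚ_[p]) * q.polarBilin.toContinuousBilinearMap x x := fun x => by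
    rw [LinearMap.toContinuousBilinearMap_apply, QuadraticMap.polarBilin_apply_apply,
      QuadraticMap.polar_self]
    ring
  have : (q : (Fin n → ℚ_[p]) → ℚ_[p]) = fun x => _ := funext h
  rw [this]
  fun_prop

lemma isLocallyConstant_of_map_add_of_trivial {ψ : ℚ_[p] → ℂ}
    (hψm : ∀ x y : ℚ_[p], ψ (x + y) = ψ x * ψ y) (hψtriv : ∀ x : ℚ_[p], ‖x‖ ≤ 1 → ψ x = 1) :
    IsLocallyConstant ψ := by
  refine (IsLocallyConstant.iff_eventually_eq ψ).2 fun x => ?_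
  filter_upwards [Metric.ball_mem_nhds x one_pos] with y hy
  have hy' : ψ (y - x) = 1 := hψtriv _
    (by simpa only [dist_eq_norm] using (Metric.mem_ball.1 hy).le)
  rw [← add_sub_cancel x y, hψm, hy', mul_one]

variable [MeasurableSpace ℚ_[p]] [BorelSpace ℚ_[p]] {μF : Measure ℚ_[p]} [μF.IsAddHaarMeasure]

lemma eventually_zpow_mul_integral_indicator_eq {X : Type*} [TopologicalSpace X]
    [MeasurableSpace X] (hμF : μF {x : ℚ_[p] | ‖x‖ ≤ 1} = 1)
    {Q : X → ℚ_[p]} (hQ : Continuous Q) {ν : Measure X} {μ : ℚ_[p] → Measure X}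
    (hsupp : ∀ a : ℚ_[p], a ≠ 0 → μ a {v | Q v ≠ a} = 0)
    (hloc : ∀ f : X → ℂ, IsLocallyConstant f → HasCompactSupport f →
      (∀ v ∈ tsupport f, Q v ≠ 0) → ∀ᶠ a in nhds 1, (∫ v, f v ∂μ a) = ∫ v, f v ∂μ 1)
    (hGL : ∀ f : X → ℂ, IsLocallyConstant f → HasCompactSupport f →
      (∀ v ∈ tsupport f, Q v ≠ 0) →
      (∫ v, f v ∂ν) = ∫ a in {a : ℚ_[p] | a ≠ 0}, (∫ v, f v ∂μ a) ∂μF)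
    {F : X → ℂ} (hF : IsLocallyConstant F) (hFc : HasCompactSupport F) :
    ∃ M : ℕ, ∀ m : ℕ, M ≤ m →
      (p : ℂ) ^ (m : ℤ) * ∫ x, {x | ‖Q x - 1‖ ≤ (p : ℝ) ^ (-(m : ℤ))}.indicator F x ∂ν
        = ∫ x, F x ∂μ 1 := by
  have hp1 : (1 : ℝ) < p := Nat.one_lt_cast.2 (Fact.out : p.Prime).one_lt
  have hp : (0 : ℝ) < p := zero_lt_one.trans hp1
  let B : ℕ → Set ℚ_[p] := fun m => {c | ‖c - 1‖ ≤ (p : ℝ) ^ (-(m : ℤ))}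
  have hBball : ∀ m, B m = Metric.closedBall 1 ((p : ℝ) ^ (-(m : ℤ))) := fun m => by
    ext; simp [B, dist_eq_norm]
  have hBclopen : ∀ m, IsClopen (B m) := fun m => by
    rw [hBball]
    exact IsUltrametricDist.isClopen_closedBall _ (zpow_pos hp _).ne'
  have hBone : ∀ m, (1 : ℚ_[p]) ∈ B m := fun m => by
    simp only [B, Set.mem_ofPred_eq, sub_self, norm_zero]
    positivity
  have hBanti : ∀ {k m : ℕ}, k ≤ m → B m ⊆ B k := fun {k m} hkm c hc =>
    le_trans (show ‖c - 1‖ ≤ (p : ℝ) ^ (-(m : ℤ)) from hc)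
      (zpow_le_zpow_right₀ hp1.le (by omega))
  have hBzero : ∀ m, 1 ≤ m → (0 : ℚ_[p]) ∉ B m := fun m hm h0 => by
    have := hBanti hm h0
    simp only [B, Set.mem_ofPred_eq, zero_sub, norm_neg, norm_one, Nat.cast_one, zpow_neg_one] at this
    exact (inv_lt_one_of_one_lt₀ hp1).not_ge this
  let f : ℕ → X → ℂ := fun m => (Q ⁻¹' B m).indicator F
  have hfl : ∀ m, IsLocallyConstant (f m) := fun m =>
    (LocallyConstant.indicator ⟨F, hF⟩ ((hBclopen m).preimage hQ)).isLocallyConstant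
  have hfc : ∀ m, HasCompactSupport (f m) := fun m =>
    hFc.mono (by simp only [f, Set.support_indicator]; exact Set.inter_subset_right)
  have hfs : ∀ m, 1 ≤ m → ∀ v ∈ tsupport (f m), Q v ≠ 0 := fun m hm v hv h0 => by
    have : tsupport (f m) ⊆ Q ⁻¹' B m :=
      closure_minimal (Set.support_indicator_subset) ((hBclopen m).preimage hQ).isClosed
    exact hBzero m hm (h0 ▸ this hv)
  have hfμ : ∀ m c, c ≠ 0 → ∫ v, f m v ∂μ c = (B m).indicator (fun c => ∫ v, F v ∂μ c) c :=
    fun m c hc => by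
      have hae : ∀ᵐ v ∂μ c, Q v = c := hsupp c hc
      by_cases hcm : c ∈ B m
      · rw [Set.indicator_of_mem hcm]
        refine integral_congr_ae (hae.mono fun v hv => ?_)
        exact Set.indicator_of_mem (by simpa [hv] using hcm) _
      · rw [Set.indicator_of_notMem hcm, ← integral_zero X ℂ]
        refine integral_congr_ae (hae.mono fun v hv => ?_)
        exact Set.indicator_of_notMem (by simpa [hv] using hcm) _
  obtain ⟨ε, hε, hεB⟩ := Metric.eventually_nhds_iff_ball.1
    (hloc (f 1) (hfl 1) (hfc 1) (hfs 1 le_rfl))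
  obtain ⟨N, hN⟩ := exists_pow_lt_of_lt_one hε (inv_lt_one_of_one_lt₀ hp1)
  refine ⟨max N 1, fun m hm => ?_⟩
  have hm1 : 1 ≤ m := (le_max_right _ _).trans hm
  have hconst : ∀ c ∈ B m, ∫ v, F v ∂μ c = ∫ v, F v ∂μ 1 := fun c hc => by
    have hc0 : c ≠ 0 := fun h => hBzero m hm1 (h ▸ hc)
    have hcε : c ∈ Metric.ball 1 ε := by
      have := hBanti ((le_max_left _ _).trans hm) hc
      rw [hBball] at this
      refine Metric.closedBall_subset_ball ?_ this
      simpa using hN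
    have := hεB c hcε
    rwa [hfμ 1 c hc0, hfμ 1 1 one_ne_zero, Set.indicator_of_mem (hBone 1),
      Set.indicator_of_mem (hBanti hm1 hc)] at this
  have hne : MeasurableSet {a : ℚ_[p] | a ≠ 0} := (measurableSet_singleton 0).compl
  have hsub : B m ⊆ {a : ℚ_[p] | a ≠ 0} := fun c hc (h : c = 0) => hBzero m hm1 (h ▸ hc)
  have hcomp : ∫ x, f m x ∂ν = (p : ℂ) ^ (-(m : ℤ)) * ∫ v, F v ∂μ 1 := by
    rw [hGL (f m) (hfl m) (hfc m) (hfs m hm1), setIntegral_congr_fun hne fun c hc => hfμ m c hc,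
      setIntegral_indicator (hBclopen m).isClosed.measurableSet,
      Set.inter_eq_right.2 hsub,
      setIntegral_congr_fun (hBclopen m).isClosed.measurableSet hconst, setIntegral_const,
      measureReal_def, Padic.haar_closedBall hμF, ENNReal.toReal_ofReal (by positivity)]
    simp
  change (p : ℂ) ^ (m : ℤ) * ∫ x, f m x ∂ν = _
  have hpC : (p : ℂ) ≠ 0 := Nat.cast_ne_zero.2 (Fact.out : p.Prime).ne_zero
  rw [hcomp, ← mul_assoc, ← zpow_add₀ hpC]
  simp

lemma setIntegral_padicBall_character {ψ : ℚ_[p] → ℂ}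
    (hψm : ∀ x y : ℚ_[p], ψ (x + y) = ψ x * ψ y) (hψtriv : ∀ x : ℚ_[p], ‖x‖ ≤ 1 → ψ x = 1)
    (hψnt : ∃ x : ℚ_[p], ‖x‖ ≤ (p : ℝ) ∧ ψ x ≠ 1)
    (hμF : μF {x : ℚ_[p] | ‖x‖ ≤ 1} = 1) (m : ℤ) (c : ℚ_[p]) :
    ∫ b in {b : ℚ_[p] | ‖b‖ ≤ (p : ℝ) ^ m}, ψ (b * c) ∂μF
      = if ‖c‖ ≤ (p : ℝ) ^ (-m) then (p : ℂ) ^ m else 0 := by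
  have hp : (0 : ℝ) < p := Nat.cast_pos.2 (Fact.out : p.Prime).pos
  have hS : MeasurableSet {b : ℚ_[p] | ‖b‖ ≤ (p : ℝ) ^ m} :=
    measurableSet_le measurable_norm measurable_const
  split_ifs with hc
  · have hone : ∀ b ∈ {b : ℚ_[p] | ‖b‖ ≤ (p : ℝ) ^ m}, ψ (b * c) = 1 := fun b hb => by
      refine hψtriv _ ?_
      rw [norm_mul]
      calc ‖b‖ * ‖c‖ ≤ (p : ℝ) ^ m * (p : ℝ) ^ (-m) := by
            gcongr
            exact hb
        _ = 1 := by rw [zpow_neg, mul_inv_cancel₀ (zpow_ne_zero _ hp.ne')]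
    rw [setIntegral_congr_fun hS hone, setIntegral_const, measureReal_def]
    have := Padic.haar_closedBall hμF m 0
    simp only [sub_zero] at this
    rw [this, ENNReal.toReal_ofReal (by positivity)]
    simp
  · obtain ⟨x, hx, hx1⟩ := hψnt
    have hc' : (p : ℝ) ^ (-m + 1) ≤ ‖c‖ := by
      by_contra! h
      exact hc ((Padic.norm_le_pow_iff_norm_lt_pow_add_one c (-m)).2 h)
    have hc0 : c ≠ 0 := by
      rintro rfl
      exact hc (by rw [norm_zero]; positivity)
    have hcpos : 0 < ‖c‖ := norm_pos_iff.2 hc0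
    have hb₀ : ‖x / c‖ ≤ (p : ℝ) ^ m := by
      rw [norm_div, div_le_iff₀ hcpos]
      calc ‖x‖ ≤ p := hx
        _ = (p : ℝ) ^ m * (p : ℝ) ^ (-m + 1) := by
            rw [← zpow_add₀ hp.ne']
            simp
        _ ≤ _ := by gcongr
    have key : ∀ b, Set.indicator {b : ℚ_[p] | ‖b‖ ≤ (p : ℝ) ^ m} (fun b => ψ (b * c)) (b + x / c)
        = Set.indicator {b : ℚ_[p] | ‖b‖ ≤ (p : ℝ) ^ m} (fun b => ψ (b * c)) b * ψ x := fun b => by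
      have hiff : ‖b + x / c‖ ≤ (p : ℝ) ^ m ↔ ‖b‖ ≤ (p : ℝ) ^ m := by
        constructor
        · intro h
          have := (Padic.nonarchimedean (b + x / c) (-(x / c))).trans
            (max_le h (by rwa [norm_neg]))
          rwa [add_neg_cancel_right] at this
        · exact fun h => (Padic.nonarchimedean _ _).trans (max_le h hb₀)
      simp only [Set.indicator_apply, Set.mem_ofPred_eq, hiff]
      split_ifs
      · rw [← hψm, add_mul, div_mul_cancel₀ _ hc0]
      · simp
    have h := integral_add_right_eq_self (μ := μF)
      (Set.indicator {b : ℚ_[p] | ‖b‖ ≤ (p : ℝ) ^ m} (fun b => ψ (b * c))) (x / c)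
    simp_rw [key] at h
    rw [integral_mul_const, integral_indicator hS] at h
    by_contra hne
    exact hx1 (mul_left_cancel₀ hne (by rw [h, mul_one]))

lemma setIntegral_padicBall_integral_mul_character {X : Type*} [TopologicalSpace X] [T2Space X]
    [MeasurableSpace X] [OpensMeasurableSpace X] {ν : Measure X} [IsFiniteMeasureOnCompacts ν]
    {ψ : ℚ_[p] → ℂ}
    (hψm : ∀ x y : ℚ_[p], ψ (x + y) = ψ x * ψ y) (hψtriv : ∀ x : ℚ_[p], ‖x‖ ≤ 1 → ψ x = 1)
    (hψnt : ∃ x : ℚ_[p], ‖x‖ ≤ (p : ℝ) ∧ ψ x ≠ 1)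
    (hμF : μF {x : ℚ_[p] | ‖x‖ ≤ 1} = 1) {Q : X → ℚ_[p]} (hQ : Continuous Q) {F : X → ℂ}
    (hF : Continuous F) (hFc : HasCompactSupport F) (m : ℤ) :
    ∫ b in {b : ℚ_[p] | ‖b‖ ≤ (p : ℝ) ^ m}, (∫ x, F x * ψ (b * Q x) ∂ν) * ψ (-b) ∂μF
      = (p : ℂ) ^ m * ∫ x, {x | ‖Q x - 1‖ ≤ (p : ℝ) ^ (-m)}.indicator F x ∂ν := by
  have hp : (0 : ℝ) < p := Nat.cast_pos.2 (Fact.out : p.Prime).pos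
  have hψc : Continuous ψ := (isLocallyConstant_of_map_add_of_trivial hψm hψtriv).continuous
  set S : Set ℚ_[p] := {b : ℚ_[p] | ‖b‖ ≤ (p : ℝ) ^ m} with hSdef
  have hSball : S = Metric.closedBall 0 ((p : ℝ) ^ m) := by ext; simp [hSdef]
  have hSclopen : IsClopen S := by
    rw [hSball]
    exact IsUltrametricDist.isClopen_closedBall _ (zpow_pos hp m).ne'
  have hScpt : IsCompact S := hSball ▸ isCompact_closedBall _ _
  have hS : MeasurableSet S := hSclopen.isClosed.measurableSet
  let k : ℚ_[p] → X → ℂ := fun b x => S.indicator (fun _ => (1 : ℂ)) b * (F x * ψ (b * (Q x - 1)))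
  have hkc : Continuous k.uncurry := by
    have h1 : Continuous (S.indicator (fun _ => (1 : ℂ))) := continuous_const.indicator
      (by simp [hSclopen.frontier_eq])
    simp only [k, Function.uncurry_def]
    fun_prop
  have hks : HasCompactSupport k.uncurry := by
    refine HasCompactSupport.of_support_subset_isCompact (hScpt.prod hFc) ?_
    rintro ⟨b, x⟩ hbx
    have hbx' : k b x ≠ 0 := hbx
    constructor
    · by_contra hb
      exact hbx' (by simp [k, Set.indicator_of_notMem (show b ∉ S from hb)])
    · by_contra hx
      exact hbx' (by simp [k, image_eq_zero_of_notMem_tsupport hx])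
  calc ∫ b in S, (∫ x, F x * ψ (b * Q x) ∂ν) * ψ (-b) ∂μF
      = ∫ b, (∫ x, k b x ∂ν) ∂μF := by
        rw [← integral_indicator hS]
        congr 1 with b
        by_cases hb : b ∈ S
        · rw [Set.indicator_of_mem hb, ← integral_mul_const]
          congr 1 with x
          simp only [k, Set.indicator_of_mem hb, one_mul]
          rw [mul_assoc, ← hψm]
          congr 2
          ring
        · simp [k, Set.indicator_of_notMem hb]
    _ = ∫ x, (∫ b, k b x ∂μF) ∂ν := integral_integral_swap_of_hasCompactSupport hkc hks
    _ = _ := by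
        rw [← integral_const_mul]
        congr 1 with x
        have : ∀ b, k b x = F x * S.indicator (fun b => ψ (b * (Q x - 1))) b := fun b => by
          by_cases hb : b ∈ S <;> simp [k, hb]
        simp_rw [this]
        rw [integral_const_mul, integral_indicator hS,
          setIntegral_padicBall_character hψm hψtriv hψnt hμF]
        simp only [Set.indicator_apply, Set.mem_ofPred_eq]
        split_ifs <;> simp [mul_comm]

end Orbital

/-- computational core of Proposition 11.1 of the paper: with
`⟨u,v⟩ = q(u+v) - q(u) - q(v)`, `q(v₁) = 1`, `Φ` locally constant compactly supported and
`a ≠ 0`, the truncated oscillatory integrals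
`I_m(a) = ∫_{‖b‖ ≤ pᵐ} (∫ |a|^{n/2} Φ(a·y) ψ(a²b·q(y)) ψ(⟨v₁,y⟩) dy) ψ(-b) db`
are eventually constant, equal to `|a|^{-n/2} ∫ Φ(x) ψ(a⁻¹⟨v₁,x⟩) dμ₁(x)`. -/
theorem stmt8 (p : ℕ) [Fact p.Prime] [MeasurableSpace ℚ_[p]] [BorelSpace ℚ_[p]]
    (μF : Measure ℚ_[p]) [μF.IsAddHaarMeasure] [SigmaFinite μF]
    (hμF : μF {x : ℚ_[p] | ‖x‖ ≤ 1} = 1)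
    (ψ : ℚ_[p] → ℂ) (hψc : Continuous ψ)
    (hψm : ∀ x y : ℚ_[p], ψ (x + y) = ψ x * ψ y)
    (hψtriv : ∀ x : ℚ_[p], ‖x‖ ≤ 1 → ψ x = 1)
    (hψnt : ∃ x : ℚ_[p], ‖x‖ ≤ (p : ℝ) ∧ ψ x ≠ 1)
    (n : ℕ)
    (q : QuadraticForm ℚ_[p] (Fin n → ℚ_[p]))
    (hq : ∀ v : Fin n → ℚ_[p], (∀ w : Fin n → ℚ_[p], q (v + w) - q v - q w = 0) → v = 0)
    (μ : ℚ_[p] → Measure (Fin n → ℚ_[p]))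
    (hreg : ∀ a : ℚ_[p], a ≠ 0 → (μ a).Regular)
    (hsupp : ∀ a : ℚ_[p], a ≠ 0 → μ a {v : Fin n → ℚ_[p] | q v ≠ a} = 0)
    (hloc : ∀ f : (Fin n → ℚ_[p]) → ℂ, IsLocallyConstant f → HasCompactSupport f →
      (∀ v ∈ tsupport f, q v ≠ 0) →
      (∀ a : ℚ_[p], a ≠ 0 → ∀ᶠ a' in nhds a, (∫ v, f v ∂ μ a') = ∫ v, f v ∂ μ a) ∧
      ∃ K : Set ℚ_[p], IsCompact K ∧ (0 : ℚ_[p]) ∉ K ∧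
        ∀ a : ℚ_[p], a ≠ 0 → a ∉ K → (∫ v, f v ∂ μ a) = 0)
    (hGL : ∀ f : (Fin n → ℚ_[p]) → ℂ, IsLocallyConstant f → HasCompactSupport f →
      (∀ v ∈ tsupport f, q v ≠ 0) →
      (∫ v, f v ∂(Measure.pi fun _ : Fin n => μF))
        = ∫ a in {a : ℚ_[p] | a ≠ 0}, (∫ v, f v ∂ μ a) ∂ μF)
    (v₁ : Fin n → ℚ_[p]) (hv₁ : q v₁ = 1)
    (Φ : (Fin n → ℚ_[p]) → ℂ) (hΦ : IsLocallyConstant Φ) (hΦc : HasCompactSupport Φ)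
    (a : ℚ_[p]) (ha : a ≠ 0) :
    ∃ M : ℕ, ∀ m : ℕ, M ≤ m →
      (∫ b in {b : ℚ_[p] | ‖b‖ ≤ (p : ℝ) ^ (m : ℤ)},
        (∫ y, (‖a‖ ^ ((n : ℝ) / 2)) •
            (Φ (a • y) * ψ (a ^ 2 * b * q y) * ψ (q (v₁ + y) - q v₁ - q y))
          ∂(Measure.pi fun _ : Fin n => μF)) * ψ (-b) ∂ μF)
      = (‖a‖ ^ (-((n : ℝ) / 2))) •
          ∫ x, Φ x * ψ (a⁻¹ * (q (v₁ + x) - q v₁ - q x)) ∂ μ 1 := by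
  have hψl := isLocallyConstant_of_map_add_of_trivial hψm hψtriv
  have hqc : Continuous q := q.continuous_of_padic
  have hpolar : ∀ x, q (v₁ + x) - q v₁ - q x = QuadraticMap.polar q v₁ x := fun _ => rfl
  have hpolarc : Continuous fun x => q (v₁ + x) - q v₁ - q x := by fun_prop
  let F : (Fin n → ℚ_[p]) → ℂ := fun x => Φ x * ψ (a⁻¹ * (q (v₁ + x) - q v₁ - q x))
  have hF : IsLocallyConstant F :=
    hΦ.mul (hψl.comp_continuous (continuous_const.mul hpolarc))
  have hFc : HasCompactSupport F := hΦc.mul_right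
  obtain ⟨M, hM⟩ := eventually_zpow_mul_integral_indicator_eq hμF hqc hsupp
    (fun f hf hfc hfs => (hloc f hf hfc hfs).1 1 one_ne_zero) hGL hF hFc
  refine ⟨M, fun m hm => ?_⟩
  have ha' : 0 < ‖a‖ := norm_pos_iff.2 ha
  have hinner : ∀ b : ℚ_[p], ∫ y, (‖a‖ ^ ((n : ℝ) / 2)) •
        (Φ (a • y) * ψ (a ^ 2 * b * q y) * ψ (q (v₁ + y) - q v₁ - q y))
          ∂(Measure.pi fun _ : Fin n => μF)
      = (‖a‖ ^ (-((n : ℝ) / 2))) •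
        ∫ x, F x * ψ (b * q x) ∂(Measure.pi fun _ : Fin n => μF) := fun b => by
    have hscale : ∀ y, Φ (a • y) * ψ (a ^ 2 * b * q y) * ψ (q (v₁ + y) - q v₁ - q y)
        = (fun x => F x * ψ (b * q x)) (a • y) := fun y => by
      simp only [F, hpolar, QuadraticMap.polar_smul_right, QuadraticMap.map_smul, smul_eq_mul,
        inv_mul_cancel_left₀ ha]
      rw [mul_right_comm]
      congr 2
      ring
    simp_rw [hscale]
    rw [integral_smul, Padic.integral_pi_comp_smul ha (fun x => F x * ψ (b * q x)), smul_smul,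
      Fintype.card_fin, ← Real.rpow_natCast, ← Real.rpow_neg ha'.le, ← Real.rpow_add ha']
    congr 2
    ring
  simp_rw [hinner, smul_mul_assoc]
  rw [integral_smul, setIntegral_padicBall_integral_mul_character hψm hψtriv hψnt hμF hqc
    hF.continuous hFc, hM m hm]
end
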